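/- Let Ω ⊂ ℝ² be a bounded open convex set with nonempty interior, and let f be a continuous function on the closure of Ω that is positive and subharmonic on Ω (Δf ≥ 0). Then (1/|Ω|) ∫_Ω f dx ≤ (3/|∂Ω|) ∫_{∂Ω} f dσ. -/

import Mathlib

open MeasureTheory

/-- The Laplacian of `f : ℝ² → ℝ`, as the sum of the second partial derivatives. -/
noncomputable def laplacian (f : EuclideanSpace ℝ (Fin 2) → ℝ)
    (x : EuclideanSpace ℝ (Fin 2)) : ℝ :=
  ∑ i : Fin 2,
    fderiv ℝ (fun y => fderiv ℝ f y (EuclideanSpace.single i (1 : ℝ))) x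
      (EuclideanSpace.single i (1 : ℝ))

/-!
Let `r` be the inradius of `Ω`. For a convex polygon slightly smaller than `Ω` let `d` be the
distance to its boundary; it is concave and at most `r`. A mollified concave function of `d`,
vanishing near the boundary of the polygon, has Laplacian at most `-1` where `d > τ` and at most
`r / τ` in the layer `0 < d ≤ τ`. Testing `Δf ≥ 0` against it bounds the integral of `f` over the
deep part by `r / τ` times the integral over the layer. The layer is covered by strips of width `τ`
along the edges, and projecting these orthogonally to `∂Ω` bounds the integral over the layer by
about `τ ∫_∂Ω f`. Letting the polygon exhaust `Ω`, `∫_Ω f ≤ r ∫_∂Ω f`.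
Finally `r |∂Ω| ≤ 2 |Ω|`, since the sector over a boundary arc seen from the centre of an inscribed
disc of radius `r` has area at least `r / 2` times the length of the arc.
-/

open Set Filter Topology Metric
open scoped ENNReal ContDiff RealInnerProductSpace Pointwise

local notation "ℝ²" => EuclideanSpace ℝ (Fin 2)

/-! ### Chords of convex sets -/

section Chord

variable {E : Type*} [NormedAddCommGroup E] [InnerProductSpace ℝ E] {Ω : Set E} {p q : E} {t ρ : ℝ}

lemma pos_of_lineMap_mem_of_mem_frontier (hΩo : IsOpen Ω) (hΩc : Convex ℝ Ω)
    (hp : p ∈ frontier Ω) (hq : q ∈ frontier Ω) (h : AffineMap.lineMap p q t ∈ Ω) : 0 < t := by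
  by_contra! ht
  have ht' : 0 < 1 - t := by linarith
  have hmem := hΩc.combo_interior_closure_mem_interior (a := (1 - t)⁻¹) (b := -t / (1 - t))
    (hΩo.interior_eq.symm ▸ h) (frontier_subset_closure hq) (inv_pos.2 ht')
    (div_nonneg (by linarith) ht'.le) (by field_simp; ring)
  refine (hΩo.frontier_eq ▸ hp).2 ?_
  convert hΩo.interior_eq ▸ hmem using 1
  rw [AffineMap.lineMap_apply_module]
  match_scalars <;> field_simp
  ring

lemma norm_lineMap_sq_mul_norm_sub_sq (ht : t * ‖p - q‖ ^ 2 = ‖p‖ ^ 2 - ⟪p, q⟫) :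
    ‖AffineMap.lineMap (k := ℝ) p q t‖ ^ 2 * ‖p - q‖ ^ 2 = ‖p‖ ^ 2 * ‖q‖ ^ 2 - ⟪p, q⟫ ^ 2 := by
  have hfoot : ‖AffineMap.lineMap (k := ℝ) p q t‖ ^ 2
      = ‖p‖ ^ 2 - 2 * t * (‖p‖ ^ 2 - ⟪p, q⟫) + t ^ 2 * ‖p - q‖ ^ 2 := by
    have hexp : AffineMap.lineMap (k := ℝ) p q t = p - t • (p - q) := by
      rw [AffineMap.lineMap_apply_module]; module
    rw [hexp, norm_sub_sq_real, inner_smul_right, inner_sub_right, norm_smul, mul_pow,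
      Real.norm_eq_abs, sq_abs, real_inner_self_eq_norm_sq]
    ring
  have hV := norm_sub_sq_real p q
  linear_combination ‖p - q‖ ^ 2 * hfoot + ‖p‖ ^ 2 * hV +
    (t * ‖p - q‖ ^ 2 - ‖p‖ ^ 2 + ⟪p, q⟫) * ht

/-- The first alternative holds if the foot of the perpendicular from `0` to the line `pq` lies
outside `Ω`, the second if it lies between `p` and `q`. -/
lemma sq_mul_norm_sub_sq_le_or (hΩo : IsOpen Ω) (hΩc : Convex ℝ Ω) (hρ : 0 ≤ ρ)
    (hball : ball 0 ρ ⊆ Ω) (hp : p ∈ frontier Ω) (hq : q ∈ frontier Ω) :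
    ρ ^ 2 * ‖p - q‖ ^ 2 ≤ ‖p‖ ^ 2 * ‖q‖ ^ 2 - ⟪p, q⟫ ^ 2 ∨
    ρ ^ 2 * ‖p - q‖ ^ 2 ≤ 2 * (‖p‖ ^ 2 * ‖q‖ ^ 2 - ⟪p, q⟫ ^ 2) - ⟪p, q⟫ * ‖p - q‖ ^ 2 := by
  have sq_le_of_notMem {x : E} (hx : x ∉ Ω) : ρ ^ 2 ≤ ‖x‖ ^ 2 :=
    pow_le_pow_left₀ hρ (by simpa using mt (@hball x) hx) 2
  have hρp := sq_le_of_notMem (hΩo.frontier_eq ▸ hp).2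
  have hρq := sq_le_of_notMem (hΩo.frontier_eq ▸ hq).2
  rcases eq_or_ne p q with rfl | hpq
  · simp [pow_two]
  have hV : 0 < ‖p - q‖ ^ 2 := pow_pos (norm_pos_iff.2 (sub_ne_zero.2 hpq)) 2
  have hVexp := norm_sub_sq_real p q
  obtain ⟨t, ht⟩ : ∃ t : ℝ, t * ‖p - q‖ ^ 2 = ‖p‖ ^ 2 - ⟪p, q⟫ :=
    ⟨_, div_mul_cancel₀ _ hV.ne'⟩
  by_cases hzΩ : AffineMap.lineMap p q t ∈ Ω
  · right
    have ht0 : 0 < t := pos_of_lineMap_mem_of_mem_frontier hΩo hΩc hp hq hzΩ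
    have ht1 : 0 < 1 - t := pos_of_lineMap_mem_of_mem_frontier hΩo hΩc hq hp (by
      rwa [AffineMap.lineMap_apply_one_sub])
    have ha : 0 < ‖p‖ ^ 2 - ⟪p, q⟫ := ht ▸ mul_pos ht0 hV
    have hb : 0 < ‖q‖ ^ 2 - ⟪p, q⟫ := by linarith [mul_pos ht1 hV]
    rcases le_total (‖p‖ ^ 2) (‖q‖ ^ 2) with hle | hle
    · nlinarith [mul_le_mul_of_nonneg_right hρp hV.le, mul_nonneg ha.le (sub_nonneg.2 hle)]
    · nlinarith [mul_le_mul_of_nonneg_right hρq hV.le, mul_nonneg hb.le (sub_nonneg.2 hle)]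
  · left
    rw [← norm_lineMap_sq_mul_norm_sub_sq ht]
    exact mul_le_mul_of_nonneg_right (sq_le_of_notMem hzΩ) hV.le

lemma sq_mul_norm_sub_sq_le_two_mul (hΩo : IsOpen Ω) (hΩc : Convex ℝ Ω) (hρ : 0 ≤ ρ)
    (hball : ball 0 ρ ⊆ Ω) (hp : p ∈ frontier Ω) (hq : q ∈ frontier Ω) (hpq : 0 ≤ ⟪p, q⟫) :
    ρ ^ 2 * ‖p - q‖ ^ 2 ≤ 2 * (‖p‖ ^ 2 * ‖q‖ ^ 2 - ⟪p, q⟫ ^ 2) := by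
  rcases sq_mul_norm_sub_sq_le_or hΩo hΩc hρ hball hp hq with h | h
  · have : 0 ≤ ρ ^ 2 * ‖p - q‖ ^ 2 := by positivity
    linarith
  · have : 0 ≤ ⟪p, q⟫ * ‖p - q‖ ^ 2 := by positivity
    linarith

lemma sq_sub_mul_norm_sub_sq_le (hΩo : IsOpen Ω) (hΩc : Convex ℝ Ω) (hρ : 0 ≤ ρ)
    (hball : ball 0 ρ ⊆ Ω) (hp : p ∈ frontier Ω) (hq : q ∈ frontier Ω) :
    (ρ ^ 2 - ‖p - q‖ ^ 2 / 4) * ‖p - q‖ ^ 2 ≤ ‖p‖ ^ 2 * ‖q‖ ^ 2 - ⟪p, q⟫ ^ 2 := by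
  have hV := norm_sub_sq_real p q
  rcases sq_mul_norm_sub_sq_le_or hΩo hΩc hρ hball hp hq with h | h
  · nlinarith [sq_nonneg (‖p - q‖ ^ 2)]
  · have hgram : ‖p‖ ^ 2 * ‖q‖ ^ 2 - ⟪p, q⟫ ^ 2 - ⟪p, q⟫ * ‖p - q‖ ^ 2
        ≤ ‖p - q‖ ^ 2 / 4 * ‖p - q‖ ^ 2 := by
      rw [hV]; nlinarith [sq_nonneg (‖p‖ ^ 2 - ‖q‖ ^ 2)]
    linarith

end Chord

/-! ### Angular sectors of the plane -/

/-- The cross product of two plane vectors, the signed area of the parallelogram they span. -/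
def cross (p q : ℝ²) : ℝ := p 0 * q 1 - p 1 * q 0

lemma cross_sq (p q : ℝ²) : cross p q ^ 2 = ‖p‖ ^ 2 * ‖q‖ ^ 2 - ⟪p, q⟫ ^ 2 := by
  simp only [cross, EuclideanSpace.real_norm_sq_eq, PiLp.inner_apply, Fin.sum_univ_two,
    RCLike.inner_apply, conj_trivial]
  ring

lemma volume_standard_triangle :
    volume {x : Fin 2 → ℝ | 0 < x 0 ∧ 0 < x 1 ∧ x 0 + x 1 < 1} = ENNReal.ofReal (1 / 2) := by
  have hpre : MeasurableEquiv.finTwoArrow (α := ℝ) ⁻¹'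
      regionBetween (fun _ => (0 : ℝ)) (fun x => 1 - x) (Ioo 0 1) =
      {x : Fin 2 → ℝ | 0 < x 0 ∧ 0 < x 1 ∧ x 0 + x 1 < 1} := by
    ext x
    simp only [regionBetween, mem_preimage, mem_ofPred_eq, mem_Ioo,
      MeasurableEquiv.finTwoArrow_apply]
    grind
  rw [← hpre, (volume_preserving_finTwoArrow ℝ).measure_preimage_equiv, Measure.volume_eq_prod,
    volume_regionBetween_eq_integral (integrableOn_const (by simp))
      ((Continuous.integrableOn_Icc (by fun_prop)).mono_set Ioo_subset_Icc_self)
      measurableSet_Ioo fun x hx => by simpa using hx.2.le,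
    ← integral_Ioc_eq_integral_Ioo, ← intervalIntegral.integral_of_le zero_le_one]
  simp only [Pi.sub_apply, sub_zero]
  rw [intervalIntegral.integral_sub (by simp) (by simp), intervalIntegral.integral_const,
    integral_id]
  norm_num

lemma ofReal_abs_cross_le_volume {p q : ℝ²} {U : Set ℝ²}
    (hU : ∀ s t : ℝ, 0 < s → 0 < t → s + t < 1 → s • p + t • q ∈ U) :
    ENNReal.ofReal |cross p q| ≤ 2 * volume U := by
  let A : Matrix (Fin 2) (Fin 2) ℝ := !![p 0, q 0; p 1, q 1]
  have himage : Matrix.toLin' A '' {x : Fin 2 → ℝ | 0 < x 0 ∧ 0 < x 1 ∧ x 0 + x 1 < 1} ⊆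
      MeasurableEquiv.toLp 2 (Fin 2 → ℝ) ⁻¹' U := by
    rintro _ ⟨x, ⟨hx0, hx1, hx⟩, rfl⟩
    rw [mem_preimage]
    convert hU (x 0) (x 1) hx0 hx1 hx using 1
    ext i
    fin_cases i <;> simp [A, dotProduct, Fin.sum_univ_two, mul_comm]
  have hvol : ENNReal.ofReal (|cross p q| * (1 / 2)) ≤ volume U := by
    calc ENNReal.ofReal (|cross p q| * (1 / 2))
        = ENNReal.ofReal |LinearMap.det (Matrix.toLin' A)| * ENNReal.ofReal (1 / 2) := by
          rw [← ENNReal.ofReal_mul (abs_nonneg _), LinearMap.det_toLin', Matrix.det_fin_two_of,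
            cross, mul_comm (p 1)]
      _ ≤ volume (MeasurableEquiv.toLp 2 (Fin 2 → ℝ) ⁻¹' U) := by
          rw [← volume_standard_triangle, ← Measure.addHaar_image_linearMap]
          exact measure_mono himage
      _ = volume U := (PiLp.volume_preserving_toLp (Fin 2)).measure_preimage_equiv
          (f := MeasurableEquiv.toLp 2 (Fin 2 → ℝ)) U
  calc ENNReal.ofReal |cross p q| = 2 * ENNReal.ofReal (|cross p q| * (1 / 2)) := by
        rw [← ENNReal.ofReal_ofNat 2, ← ENNReal.ofReal_mul zero_le_two]; congr 1; ring
    _ ≤ 2 * volume U := by gcongr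

/-- A label for the angular sector containing `x`: the signs of the coordinates and the integer
part of the slope in units of `η`. On the vertical axis the slope takes the junk value `0`. -/
noncomputable def sector (η : ℝ) (x : ℝ²) : SignType × SignType × ℤ :=
  (SignType.sign (x 0), SignType.sign (x 1), ⌊x 1 / x 0 / η⌋)

lemma neg_or_zero_or_pos_of_sign_eq {a b : ℝ} (h : SignType.sign a = SignType.sign b) :
    (a < 0 ∧ b < 0) ∨ (a = 0 ∧ b = 0) ∨ (0 < a ∧ 0 < b) := by
  rcases lt_trichotomy a 0 with ha | rfl | ha
  · exact .inl ⟨ha, sign_eq_neg_one_iff.1 (h ▸ sign_neg ha)⟩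
  · exact .inr (.inl ⟨rfl, sign_eq_zero_iff.1 (h ▸ sign_zero)⟩)
  · exact .inr (.inr ⟨ha, sign_eq_one_iff.1 (h ▸ sign_pos ha)⟩)

lemma sign_combo_of_sign_eq {a b s t : ℝ} (h : SignType.sign a = SignType.sign b) (hs : 0 < s)
    (ht : 0 < t) : SignType.sign (s * a + t * b) = SignType.sign a := by
  rcases neg_or_zero_or_pos_of_sign_eq h with ⟨ha, hb⟩ | ⟨rfl, rfl⟩ | ⟨ha, hb⟩
  · rw [sign_neg ha, sign_neg (by nlinarith)]
  · simp
  · rw [sign_pos ha, sign_pos (by positivity)]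

lemma mul_nonneg_of_sign_eq {a b : ℝ} (h : SignType.sign a = SignType.sign b) : 0 ≤ a * b := by
  rcases neg_or_zero_or_pos_of_sign_eq h with ⟨ha, hb⟩ | ⟨rfl, rfl⟩ | ⟨ha, hb⟩
  · exact (mul_pos_of_neg_of_neg ha hb).le
  · simp
  · positivity

/-- The slope of a positive combination is a mediant, hence a convex combination, of the slopes. -/
lemma mediant_mem_of_sign_eq {I : Set ℝ} (hI : Convex ℝ I) {a b c d s t : ℝ} (hb : b ≠ 0)
    (hbd : SignType.sign b = SignType.sign d) (hab : a / b ∈ I) (hcd : c / d ∈ I)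
    (hs : 0 < s) (ht : 0 < t) : (s * a + t * c) / (s * b + t * d) ∈ I := by
  have hd : d ≠ 0 := by rwa [← sign_ne_zero, ← hbd, sign_ne_zero]
  have hsum : SignType.sign (s * b + t * d) = SignType.sign b := sign_combo_of_sign_eq hbd hs ht
  have hsum_ne : s * b + t * d ≠ 0 := by rwa [← sign_ne_zero, hsum, sign_ne_zero]
  have hweight {r e : ℝ} (hr : 0 < r) (he : SignType.sign e = SignType.sign b) :
      0 ≤ r * e / (s * b + t * d) := by
    rw [mul_div_assoc, ← mul_div_mul_right _ _ hsum_ne]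
    exact mul_nonneg hr.le
      (div_nonneg (mul_nonneg_of_sign_eq (he.trans hsum.symm)) (mul_self_nonneg _))
  convert hI hab hcd (hweight hs rfl) (hweight ht hbd.symm) (by field_simp) using 1
  simp only [smul_eq_mul]
  field_simp

lemma sector_combo {η : ℝ} {p q : ℝ²} (h : sector η p = sector η q) {s t : ℝ}
    (hs : 0 < s) (ht : 0 < t) : sector η (s • p + t • q) = sector η p := by
  simp only [sector, Prod.mk.injEq, PiLp.add_apply, PiLp.smul_apply, smul_eq_mul] at h ⊢
  obtain ⟨h0, h1, hslope⟩ := h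
  refine ⟨sign_combo_of_sign_eq h0 hs ht, sign_combo_of_sign_eq h1 hs ht, ?_⟩
  by_cases hp0 : p 0 = 0
  · have hq0 : q 0 = 0 := by simpa [hp0] using h0.symm
    simp [hp0, hq0]
  · have hconv : Convex ℝ {r : ℝ | ⌊r / η⌋ = ⌊p 1 / p 0 / η⌋} := by
      have := (convex_Ico (⌊p 1 / p 0 / η⌋ : ℝ) (⌊p 1 / p 0 / η⌋ + 1)).linear_preimage
        (LinearMap.mulRight ℝ η⁻¹)
      rwa [← Int.preimage_floor_singleton] at this
    exact mediant_mem_of_sign_eq hconv hp0 h0 rfl hslope.symm hs ht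

lemma inner_nonneg_of_sector_eq {η : ℝ} {p q : ℝ²} (h : sector η p = sector η q) :
    0 ≤ ⟪p, q⟫ := by
  simp only [sector, Prod.mk.injEq] at h
  simp only [PiLp.inner_apply, Fin.sum_univ_two, RCLike.inner_apply, conj_trivial]
  linarith [mul_nonneg_of_sign_eq h.1, mul_nonneg_of_sign_eq h.2.1]

lemma abs_cross_le_of_sector_eq {η : ℝ} (hη : 0 < η) {p q : ℝ²} (h : sector η p = sector η q) :
    |cross p q| ≤ η * (‖p‖ * ‖q‖) := by
  simp only [sector, Prod.mk.injEq] at h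
  obtain ⟨h0, -, hslope⟩ := h
  by_cases hp0 : p 0 = 0
  · have hq0 : q 0 = 0 := by simpa [hp0] using h0.symm
    simp only [cross, hp0, hq0, zero_mul, mul_zero, sub_zero, abs_zero]
    positivity
  have hq0 : q 0 ≠ 0 := fun hq0 => hp0 (by simpa [hq0] using h0)
  have hcross : cross p q = η * (p 0 * q 0) * (q 1 / q 0 / η - p 1 / p 0 / η) := by
    rw [cross]; field_simp
  rw [hcross, abs_mul, abs_mul, abs_mul, abs_of_pos hη]
  calc η * (|p 0| * |q 0|) * |q 1 / q 0 / η - p 1 / p 0 / η|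
      ≤ η * (‖p‖ * ‖q‖) * 1 := by
        gcongr
        · exact PiLp.norm_apply_le p 0
        · exact PiLp.norm_apply_le q 0
        · exact (Int.abs_sub_lt_one_of_floor_eq_floor hslope.symm).le
    _ = η * (‖p‖ * ‖q‖) := mul_one _

lemma measurableSet_sector_fiber (η : ℝ) (k : SignType × SignType × ℤ) :
    MeasurableSet (sector η ⁻¹' {k}) := by
  have hsign (i : Fin 2) (k : SignType) : MeasurableSet {x : ℝ² | SignType.sign (x i) = k} := by
    have hcoord : Measurable fun x : ℝ² => x i := by fun_prop
    rcases k with _ | _ | _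
    · convert hcoord (measurableSet_singleton 0) using 1
      exact ext fun x => sign_eq_zero_iff
    · convert hcoord measurableSet_Iio using 1
      exact ext fun x => sign_eq_neg_one_iff
    · convert hcoord measurableSet_Ioi using 1
      exact ext fun x => sign_eq_one_iff
  have hslope : Measurable fun x : ℝ² => ⌊x 1 / x 0 / η⌋ := Int.measurable_floor.comp (by fun_prop)
  have hfiber : sector η ⁻¹' {k} = {x : ℝ² | SignType.sign (x 0) = k.1} ∩
      ({x : ℝ² | SignType.sign (x 1) = k.2.1} ∩
        (fun x : ℝ² => ⌊x 1 / x 0 / η⌋) ⁻¹' {k.2.2}) := by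
    ext x
    simp [sector, Prod.ext_iff]
  rw [hfiber]
  exact (hsign 0 _).inter ((hsign 1 _).inter (hslope (measurableSet_singleton _)))

/-! ### Perimeter, area and inradius -/

lemma hausdorffMeasure_one_le_of_ediam_fiber_le {X ι : Type*} [MetricSpace X] [MeasurableSpace X]
    [BorelSpace X] [Countable ι] {ν : Measure X} {A B : Set X} {κ : ℕ → X → ι} {r : ℕ → ℝ≥0∞}
    {C : ℝ≥0∞} (hκ : ∀ n k, MeasurableSet (κ n ⁻¹' {k})) (hr : Tendsto r atTop (𝓝 0))
    (hdiam : ∀ n k, ediam (A ∩ κ n ⁻¹' {k}) ≤ r n)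
    (hC : ∀ᶠ n in atTop, ∀ k, ediam (A ∩ κ n ⁻¹' {k}) ≤ C * ν (B ∩ κ n ⁻¹' {k})) :
    μH[1] A ≤ C * ν B := by
  have hcover (n : ℕ) : A ⊆ ⋃ k, A ∩ κ n ⁻¹' {k} := fun x hx => mem_iUnion.2 ⟨κ n x, hx, rfl⟩
  have hdisj (n : ℕ) : Pairwise (Function.onFun Disjoint fun k => κ n ⁻¹' {k}) :=
    fun k l hkl => (disjoint_singleton.2 hkl).preimage _
  calc μH[1] A ≤ liminf (fun n => ∑' k, ediam (A ∩ κ n ⁻¹' {k}) ^ (1 : ℝ)) atTop :=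
        Measure.hausdorffMeasure_le_liminf_tsum 1 A r hr _ (.of_forall hdiam) (.of_forall hcover)
    _ ≤ liminf (fun _ : ℕ => C * ν B) atTop := by
        refine liminf_le_liminf (hC.mono fun n hn => ?_)
        calc ∑' k, ediam (A ∩ κ n ⁻¹' {k}) ^ (1 : ℝ)
            ≤ ∑' k, C * ν (B ∩ κ n ⁻¹' {k}) := by
              simpa only [ENNReal.rpow_one] using ENNReal.tsum_le_tsum hn
          _ ≤ C * ν B := by
              rw [ENNReal.tsum_mul_left]
              gcongr
              simpa only [Measure.restrict_apply (hκ n _), inter_comm, Measure.restrict_apply_univ]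
                using tsum_measure_le_measure_univ (μ := ν.restrict B)
                  (fun k => (hκ n k).nullMeasurableSet) fun k l hkl => (hdisj n hkl).aedisjoint
    _ = C * ν B := liminf_const _

section Perimeter

variable {Ω : Set ℝ²} {ρ r : ℝ}

lemma dist_le_of_sector_eq (hΩo : IsOpen Ω) (hΩc : Convex ℝ Ω) (hρ : 0 < ρ)
    (hball : ball 0 ρ ⊆ Ω) {R η : ℝ} (hR : ∀ x ∈ closure Ω, ‖x‖ ≤ R) (hη : 0 < η) {p q : ℝ²}
    (hp : p ∈ frontier Ω) (hq : q ∈ frontier Ω) (hpq : sector η p = sector η q) :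
    dist p q ≤ 2 / ρ * (η * (R * R)) := by
  have hcross : |cross p q| ≤ η * (R * R) := (abs_cross_le_of_sector_eq hη hpq).trans <| by
    have hpR := hR p (frontier_subset_closure hp)
    have hqR := hR q (frontier_subset_closure hq)
    gcongr
    exact (norm_nonneg p).trans hpR
  have hgram := sq_mul_norm_sub_sq_le_two_mul hΩo hΩc hρ.le hball hp hq
    (inner_nonneg_of_sector_eq hpq)
  rw [← cross_sq] at hgram
  have hsq : (ρ * ‖p - q‖) ^ 2 ≤ (2 * |cross p q|) ^ 2 := by
    rw [mul_pow, mul_pow, sq_abs]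
    linarith [sq_nonneg (cross p q)]
  rw [dist_eq_norm, div_mul_eq_mul_div, le_div_iff₀' hρ]
  linarith [le_of_sq_le_sq hsq (by positivity)]

lemma ofReal_mul_edist_le_of_sector_eq (hΩo : IsOpen Ω) (hΩc : Convex ℝ Ω) (hr : 0 < r)
    (hrρ : r < ρ) (hball : ball 0 ρ ⊆ Ω) {η : ℝ} {p q : ℝ²} (hp : p ∈ frontier Ω)
    (hq : q ∈ frontier Ω) (hpq : sector η p = sector η q)
    (hclose : ‖p - q‖ ^ 2 / 4 ≤ ρ ^ 2 - r ^ 2) :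
    ENNReal.ofReal r * edist p q ≤ 2 * volume (Ω ∩ sector η ⁻¹' {sector η p}) := by
  have hzero : (0 : ℝ²) ∈ interior Ω := hΩo.interior_eq.symm ▸ hball (by simp; linarith)
  have htriangle : ∀ s t : ℝ, 0 < s → 0 < t → s + t < 1 →
      s • p + t • q ∈ Ω ∩ sector η ⁻¹' {sector η p} := by
    refine fun s t hs ht hst => ⟨?_, sector_combo hpq hs ht⟩
    have hseg := hΩc.closure (frontier_subset_closure hp) (frontier_subset_closure hq)
      (a := s / (s + t)) (b := t / (s + t)) (by positivity) (by positivity) (by field_simp)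
    have hcone := hΩc.combo_interior_closure_mem_interior hzero hseg
      (a := 1 - (s + t)) (b := s + t) (by linarith) (by positivity) (by ring)
    convert hΩo.interior_eq ▸ hcone using 1
    match_scalars <;> field_simp
  have hgram := sq_sub_mul_norm_sub_sq_le hΩo hΩc (hr.trans hrρ).le hball hp hq
  rw [← cross_sq] at hgram
  have hsq : (r * ‖p - q‖) ^ 2 ≤ |cross p q| ^ 2 := by
    rw [mul_pow, sq_abs]
    exact (mul_le_mul_of_nonneg_right (by linarith) (sq_nonneg _)).trans hgram
  calc ENNReal.ofReal r * edist p q = ENNReal.ofReal (r * ‖p - q‖) := by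
        rw [edist_dist, dist_eq_norm, ENNReal.ofReal_mul hr.le]
    _ ≤ ENNReal.ofReal |cross p q| :=
        ENNReal.ofReal_le_ofReal (le_of_sq_le_sq hsq (abs_nonneg _))
    _ ≤ 2 * volume (Ω ∩ sector η ⁻¹' {sector η p}) := ofReal_abs_cross_le_volume htriangle

lemma ofReal_mul_perimeter_le_of_ball_zero_subset (hΩo : IsOpen Ω)
    (hΩb : Bornology.IsBounded Ω) (hΩc : Convex ℝ Ω) (hr : 0 < r) (hrρ : r < ρ)
    (hball : ball 0 ρ ⊆ Ω) : ENNReal.ofReal r * μH[1] (frontier Ω) ≤ 2 * volume Ω := by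
  obtain ⟨R, hR⟩ := hΩb.closure.exists_norm_le
  have hρ : 0 < ρ := hr.trans hrρ
  obtain ⟨η, hη, hη0⟩ : ∃ η : ℕ → ℝ, (∀ n, 0 < η n) ∧ Tendsto η atTop (𝓝 0) :=
    ⟨fun n => 1 / ((n : ℝ) + 1), fun n => Nat.one_div_pos_of_nat,
      tendsto_one_div_add_atTop_nhds_zero_nat⟩
  have hlim : Tendsto (fun n => 2 / ρ * (η n * (R * R))) atTop (𝓝 0) := by
    simpa using (hη0.mul_const (R * R)).const_mul (2 / ρ)
  have hdist (n : ℕ) {p q : ℝ²} (hp : p ∈ frontier Ω) (hq : q ∈ frontier Ω)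
      (hpq : sector (η n) p = sector (η n) q) : dist p q ≤ 2 / ρ * (η n * (R * R)) :=
    dist_le_of_sector_eq hΩo hΩc hρ hball hR (hη n) hp hq hpq
  have hclose : ∀ᶠ n in atTop, (2 / ρ * (η n * (R * R))) ^ 2 / 4 ≤ ρ ^ 2 - r ^ 2 := by
    have hlim' : Tendsto (fun n => (2 / ρ * (η n * (R * R))) ^ 2 / 4) atTop (𝓝 0) := by
      simpa using (hlim.pow 2).div_const 4
    exact hlim'.eventually_le_const (sub_pos.2 (by gcongr))
  have key : μH[1] (frontier Ω) ≤ 2 / ENNReal.ofReal r * volume Ω := by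
    refine hausdorffMeasure_one_le_of_ediam_fiber_le (κ := fun n => sector (η n))
      (r := fun n => ENNReal.ofReal (2 / ρ * (η n * (R * R))))
      (fun n k => measurableSet_sector_fiber (η n) k) (by simpa using ENNReal.tendsto_ofReal hlim)
      (fun n k => ediam_le ?_) (hclose.mono fun n hn k => ediam_le ?_)
    · rintro p ⟨hp, rfl⟩ q ⟨hq, hqp⟩
      exact edist_dist p q ▸ ENNReal.ofReal_le_ofReal (hdist n hp hq hqp.symm)
    · rintro p ⟨hp, rfl⟩ q ⟨hq, hqp⟩
      rw [← ENNReal.mul_div_right_comm, ENNReal.le_div_iff_mul_le (by simp [hr]) (by simp),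
        mul_comm]
      refine ofReal_mul_edist_le_of_sector_eq hΩo hΩc hr hrρ hball hp hq hqp.symm (le_trans ?_ hn)
      rw [← dist_eq_norm]
      gcongr
      exact hdist n hp hq hqp.symm
  rw [mul_comm]
  rwa [← ENNReal.mul_div_right_comm, ENNReal.le_div_iff_mul_le (by simp [hr]) (by simp)] at key

lemma ofReal_mul_perimeter_le_of_ball_subset (hΩo : IsOpen Ω)
    (hΩb : Bornology.IsBounded Ω) (hΩc : Convex ℝ Ω) (hr : 0 < r) (hrρ : r < ρ) {c : ℝ²}
    (hball : ball c ρ ⊆ Ω) : ENNReal.ofReal r * μH[1] (frontier Ω) ≤ 2 * volume Ω := by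
  let T : ℝ² ≃ᵢ ℝ² := IsometryEquiv.addLeft (-c)
  have hTball : ball 0 ρ ⊆ T '' Ω := by
    have : ball 0 ρ = T '' ball c ρ := by simp [T]
    exact this ▸ image_mono hball
  have hfrontier : frontier (T '' Ω) = T '' frontier Ω := (T.toHomeomorph.image_frontier Ω).symm
  have hvolume : volume (T '' Ω) = volume Ω := measure_vadd volume (-c) Ω
  have := ofReal_mul_perimeter_le_of_ball_zero_subset (Ω := T '' Ω) (T.toHomeomorph.isOpenMap _ hΩo)
    (T.isometry.lipschitz.isBounded_image hΩb) (hΩc.vadd (-c)) hr hrρ hTball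
  rwa [hfrontier, T.isometry.hausdorffMeasure_image (.inl zero_le_one), hvolume] at this

end Perimeter

/-- The inradius of a set: the supremum of the radii of the balls it contains. It takes the junk
value `0` if these radii are unbounded. -/
noncomputable def inradius {X : Type*} [PseudoMetricSpace X] (s : Set X) : ℝ :=
  sSup {r | ∃ x, ball x r ⊆ s}

lemma inradius_nonneg {X : Type*} [PseudoMetricSpace X] [Nonempty X] (s : Set X) :
    0 ≤ inradius s := by
  by_cases hbdd : BddAbove {r | ∃ x, ball x r ⊆ s}
  · exact le_csSup hbdd ⟨Classical.arbitrary X, by simp⟩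
  · exact (Real.sSup_of_not_bddAbove hbdd).ge

lemma le_inradius_of_ball_subset {E : Type*} [NormedAddCommGroup E] [NormedSpace ℝ E]
    [Nontrivial E] {s : Set E} (hs : Bornology.IsBounded s) {x : E} {r : ℝ} (h : ball x r ⊆ s) :
    r ≤ inradius s := by
  refine le_csSup ⟨diam s, ?_⟩ ⟨x, h⟩
  rintro r' ⟨y, hy⟩
  rcases le_or_gt r' 0 with hr' | hr'
  · exact hr'.trans diam_nonneg
  · have hdiam : 2 * r' ≤ diam s := by
      rw [← diam_ball_eq y hr'.le]; exact diam_mono hy hs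
    linarith

lemma inradius_mul_perimeter_le {Ω : Set ℝ²} (hΩo : IsOpen Ω) (hΩb : Bornology.IsBounded Ω)
    (hΩc : Convex ℝ Ω) :
    inradius Ω * (μH[1] (frontier Ω)).toReal ≤ 2 * (volume Ω).toReal := by
  suffices h : ∀ r < inradius Ω, r * (μH[1] (frontier Ω)).toReal ≤ 2 * (volume Ω).toReal from
    le_of_tendsto (x := 𝓝[<] (inradius Ω))
      ((tendsto_id.mono_left nhdsWithin_le_nhds).mul_const _) (eventually_mem_nhdsWithin.mono h)
  intro r hr
  rcases le_or_gt r 0 with hr0 | hr0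
  · exact (mul_nonpos_of_nonpos_of_nonneg hr0 ENNReal.toReal_nonneg).trans (by positivity)
  obtain ⟨ρ, ⟨c, hball⟩, hrρ⟩ : ∃ ρ ∈ {r | ∃ x, ball x r ⊆ Ω}, r < ρ :=
    exists_lt_of_lt_csSup ⟨0, 0, by simp⟩ hr
  have := ENNReal.toReal_mono (ENNReal.mul_ne_top (by simp) hΩb.measure_lt_top.ne)
    (ofReal_mul_perimeter_le_of_ball_subset hΩo hΩb hΩc hr0 hrρ hball)
  rwa [ENNReal.toReal_mul, ENNReal.toReal_mul, ENNReal.toReal_ofReal hr0.le] at this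

/-! ### Subharmonic functions in the sense of distributions -/

lemma hasIntegral_GP_pderiv_zero {n : ℕ} (I : BoxIntegral.Box (Fin (n + 1)))
    {F : (Fin (n + 1) → ℝ) → ℝ} {F' : (Fin (n + 1) → ℝ) → (Fin (n + 1) → ℝ) →L[ℝ] ℝ}
    (hF : ∀ x, HasFDerivAt F (F' x) x) (hF0 : ∀ x ∉ BoxIntegral.Box.Ioo I, F x = 0)
    (i : Fin (n + 1)) :
    BoxIntegral.HasIntegral I .GP (fun x => F' x (Pi.single i 1))
      BoxIntegral.BoxAdditiveMap.volume 0 := by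
  have hface (c : ℝ) (hc : c ∉ Ioo (I.lower i) (I.upper i)) :
      (fun y => F (i.insertNth c y)) = 0 := by
    refine funext fun y => hF0 _ fun hy => hc ?_
    simpa using hy i (mem_univ i)
  have := BoxIntegral.hasIntegral_GP_pderiv I F F' ∅ countable_empty (by simp)
    (fun x _ => (hF x).hasFDerivWithinAt) i
  rwa [hface _ (by simp), hface _ (by simp), sub_self] at this

/-- The divergence theorem for the Henstock–Kurzweil integral asks only for differentiability, so
the partial derivatives of the `F i` need not be Lebesgue integrable. -/
lemma integral_nonneg_of_add_divergence_nonneg {n : ℕ} {g : (Fin (n + 1) → ℝ) → ℝ}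
    {F : Fin (n + 1) → (Fin (n + 1) → ℝ) → ℝ} {K : Set (Fin (n + 1) → ℝ)} (hK : IsCompact K)
    (hg : Continuous g) (hg0 : ∀ x ∉ K, g x = 0) (hF : ∀ i, Differentiable ℝ (F i))
    (hF0 : ∀ i, ∀ x ∉ K, F i x = 0)
    (hdiv : ∀ x, 0 ≤ g x + ∑ i, fderiv ℝ (F i) x (Pi.single i 1)) : 0 ≤ ∫ x, g x := by
  obtain ⟨R, hR0, hR⟩ := hK.isBounded.exists_pos_norm_lt
  let I : BoxIntegral.Box (Fin (n + 1)) := ⟨fun _ => -R, fun _ => R, fun _ => by linarith⟩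
  have hKI : K ⊆ BoxIntegral.Box.Ioo I := fun x hx i _ =>
    abs_lt.1 ((norm_le_pi_norm x i).trans_lt (hR x hx))
  have hdivI : BoxIntegral.HasIntegral I .GP
      (fun x => ∑ i, fderiv ℝ (F i) x (Pi.single i 1)) BoxIntegral.BoxAdditiveMap.volume 0 := by
    have := BoxIntegral.HasIntegral.sum (s := Finset.univ) fun i _ =>
      hasIntegral_GP_pderiv_zero I (fun x => (hF i x).hasFDerivAt)
      (fun x hx => hF0 i x fun hxK => hx (hKI hxK)) i
    simpa using this
  have hgI := ContinuousOn.hasBoxIntegral (μ := volume) (I := I) hg.continuousOn .GP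
  calc 0 ≤ BoxIntegral.integral I .GP
          (fun x => g x + ∑ i, fderiv ℝ (F i) x (Pi.single i 1))
          (volume : Measure (Fin (n + 1) → ℝ)).toBoxAdditive.toSMul :=
        BoxIntegral.integral_nonneg (fun x _ => hdiv x) volume
    _ = ∫ x in I, g x := (hgI.add hdivI).integral_eq.trans (add_zero _)
    _ = ∫ x, g x := setIntegral_eq_integral_of_forall_compl_eq_zero fun x hx =>
        hg0 x fun hxK => hx (BoxIntegral.Box.Ioo_subset_coe I (hKI hxK))

section Green

variable {E : Type*} [NormedAddCommGroup E] [NormedSpace ℝ E] {f φ : E → ℝ} {x : E}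

lemma fderiv_apply_eventuallyEq_zero (hx : x ∉ tsupport φ) (e : E) :
    (fun y => fderiv ℝ φ y e) =ᶠ[𝓝 x] 0 := by
  filter_upwards [(notMem_tsupport_iff_eventuallyEq.1 hx).eventuallyEq_nhds] with y hy
  simp [hy.fderiv_eq]

lemma continuous_fderiv_fderiv_apply (hφ : ContDiff ℝ 2 φ) (e : E) :
    Continuous fun x => fderiv ℝ (fun y => fderiv ℝ φ y e) x e := by
  have : ContDiff ℝ 1 fun y => fderiv ℝ φ y e :=
    (hφ.fderiv_right (m := 1) le_rfl).clm_apply contDiff_const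
  exact (this.continuous_fderiv one_ne_zero).clm_apply continuous_const

lemma continuous_mul_of_tsupport_subset {X : Type*} [TopologicalSpace X] {U : Set X}
    {f g : X → ℝ} (hU : IsOpen U) (hf : ContinuousOn f U) (hg : Continuous g)
    (hgU : tsupport g ⊆ U) : Continuous fun x => f x * g x := by
  rw [continuous_iff_continuousAt]
  intro x
  by_cases hx : x ∈ U
  · exact (hf.continuousAt (hU.mem_nhds hx)).mul hg.continuousAt
  · refine continuousAt_const.congr (f := fun _ => 0) ?_
    filter_upwards [notMem_tsupport_iff_eventuallyEq.1 fun h => hx (hgU h)] with y hy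
    simp [hy]

lemma exists_hasFDerivAt_green {U : Set E} (hf : ∀ x ∈ U, DifferentiableAt ℝ f x)
    (hf' : ∀ x ∈ U, DifferentiableAt ℝ (fun y => fderiv ℝ f y) x) (hφ : ContDiff ℝ 2 φ)
    (hφU : tsupport φ ⊆ U) (e x : E) :
    ∃ L : E →L[ℝ] ℝ,
      HasFDerivAt (fun y => φ y * fderiv ℝ f y e - f y * fderiv ℝ φ y e) L x ∧
      L e = φ x * fderiv ℝ (fun y => fderiv ℝ f y e) x e
        - f x * fderiv ℝ (fun y => fderiv ℝ φ y e) x e := by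
  by_cases hx : x ∈ U
  · have hfe : DifferentiableAt ℝ (fun y => fderiv ℝ f y e) x :=
      (hf' x hx).clm_apply (differentiableAt_const e)
    have hφe : DifferentiableAt ℝ (fun y => fderiv ℝ φ y e) x :=
      ((hφ.fderiv_right (m := 1) le_rfl).differentiable one_ne_zero x).clm_apply
        (differentiableAt_const e)
    refine ⟨_, ((hφ.differentiable two_ne_zero x).hasFDerivAt.mul hfe.hasFDerivAt).sub
      ((hf x hx).hasFDerivAt.mul hφe.hasFDerivAt), ?_⟩
    simp
    ring
  · have hxφ : x ∉ tsupport φ := fun h => hx (hφU h)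
    have hφ0 := notMem_tsupport_iff_eventuallyEq.1 hxφ
    have hφe0 := fderiv_apply_eventuallyEq_zero hxφ e
    refine ⟨0, (hasFDerivAt_const (0 : ℝ) x).congr_of_eventuallyEq ?_, ?_⟩
    · filter_upwards [hφ0, hφe0] with y hy hy'
      simp_all
    · simp [hφe0.fderiv_eq, hφ0.self_of_nhds]

end Green

lemma continuous_laplacian {φ : ℝ² → ℝ} (hφ : ContDiff ℝ 2 φ) : Continuous (laplacian φ) :=
  continuous_finsetSum _ fun _ _ => continuous_fderiv_fderiv_apply hφ _

lemma tsupport_laplacian_subset (φ : ℝ² → ℝ) : tsupport (laplacian φ) ⊆ tsupport φ := by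
  refine closure_minimal (fun x hx => ?_) (isClosed_tsupport φ)
  contrapose! hx
  simp [laplacian, (fderiv_apply_eventuallyEq_zero hx _).fderiv_eq]

lemma integral_mul_laplacian_nonneg {Ω : Set ℝ²} (hΩo : IsOpen Ω) {f φ : ℝ² → ℝ}
    (hf : ∀ x ∈ Ω, DifferentiableAt ℝ f x)
    (hf' : ∀ x ∈ Ω, DifferentiableAt ℝ (fun y => fderiv ℝ f y) x)
    (hsub : ∀ x ∈ Ω, 0 ≤ laplacian f x) (hφ : ContDiff ℝ 2 φ) (hφc : HasCompactSupport φ)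
    (hφΩ : tsupport φ ⊆ Ω) (hφ0 : ∀ x, 0 ≤ φ x) : 0 ≤ ∫ x, f x * laplacian φ x := by
  let T : (Fin 2 → ℝ) ≃L[ℝ] ℝ² := (PiLp.continuousLinearEquiv 2 ℝ fun _ : Fin 2 => ℝ).symm
  let e (i : Fin 2) : ℝ² := EuclideanSpace.single i 1
  choose L hL hLe using fun i x => exists_hasFDerivAt_green hf hf' hφ hφΩ (e i) x
  have hLT (i : Fin 2) (x : Fin 2 → ℝ) := (hL i (T x)).comp x T.hasFDerivAt
  have hnotMem {x : Fin 2 → ℝ} (hx : x ∉ T ⁻¹' tsupport φ) : T x ∉ tsupport φ := hx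
  have hfcont : ContinuousOn f Ω := fun x hx => (hf x hx).continuousAt.continuousWithinAt
  rw [← (PiLp.volume_preserving_toLp (Fin 2)).integral_comp
    (MeasurableEquiv.toLp 2 (Fin 2 → ℝ)).measurableEmbedding]
  refine integral_nonneg_of_add_divergence_nonneg (T.toHomeomorph.isCompact_preimage.2 hφc)
    ((continuous_mul_of_tsupport_subset hΩo hfcont (continuous_laplacian hφ)
      ((tsupport_laplacian_subset φ).trans hφΩ)).comp T.continuous)
    (fun x hx => ?_) (fun i x => (hLT i x).differentiableAt) (fun i x hx => ?_) fun x => ?_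
  · have : laplacian φ (T x) = 0 :=
      image_eq_zero_of_notMem_tsupport fun h => hx (tsupport_laplacian_subset φ h)
    exact mul_eq_zero_of_right _ this
  · have h0 := image_eq_zero_of_notMem_tsupport (hnotMem hx)
    have h1 := (fderiv_apply_eventuallyEq_zero (hnotMem hx) (e i)).self_of_nhds
    simp_all
  · have hsum : f (T x) * laplacian φ (T x) + ∑ i, L i (T x) (e i)
        = φ (T x) * laplacian f (T x) := by
      simp only [hLe, laplacian, Finset.sum_sub_distrib, ← Finset.mul_sum, e]
      ring
    have hnonneg : 0 ≤ φ (T x) * laplacian f (T x) := by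
      by_cases hx : T x ∈ Ω
      · exact mul_nonneg (hφ0 _) (hsub _ hx)
      · simp [image_eq_zero_of_notMem_tsupport fun h => hx (hφΩ h)]
    rw [← hsum] at hnonneg
    refine hnonneg.trans_eq (congrArg _ (Finset.sum_congr rfl fun i _ => ?_))
    exact (congrArg (· (Pi.single i 1)) (hLT i x).fderiv).symm

/-! ### Second differences and mollification -/

/-- The symmetric second difference of `φ` at `x` with step `v`. -/
def secondDiff {E : Type*} [AddCommGroup E] (φ : E → ℝ) (x v : E) : ℝ :=
  φ (x + v) + φ (x - v) - 2 * φ x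

lemma deriv_deriv_le_of_eventually_le_mul_sq {g : ℝ → ℝ} {C : ℝ} (hg : Differentiable ℝ g)
    (hg' : DifferentiableAt ℝ (deriv g) 0) (hg0 : g 0 = 0) (hg'0 : deriv g 0 = 0)
    (h : ∀ᶠ t in 𝓝 0, g t ≤ C * t ^ 2) : deriv (deriv g) 0 ≤ 2 * C := by
  let w (t : ℝ) : ℝ := g t - C * t ^ 2
  have hw (t : ℝ) : HasDerivAt w (deriv g t - C * (2 * t)) t := by
    simpa using (hg t).hasDerivAt.fun_sub ((hasDerivAt_pow 2 t).const_mul C)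
  have hdw : deriv w = fun t => deriv g t - C * (2 * t) := funext fun t => (hw t).deriv
  have hw' : HasDerivAt (deriv w) (deriv (deriv g) 0 - 2 * C) 0 := by
    rw [hdw]
    simpa [mul_comm C] using
      hg'.hasDerivAt.fun_sub (((hasDerivAt_id (0 : ℝ)).const_mul 2).const_mul C)
  by_contra! hlt
  have hmin : IsLocalMin w 0 :=
    isLocalMin_of_deriv_deriv_pos (by rw [hw'.deriv]; linarith) (by simp [hdw, hg'0])
      (hw 0).continuousAt
  have hzero : w =ᶠ[𝓝 0] 0 := by
    filter_upwards [hmin, h] with t hle hge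
    have hw0 : w 0 = 0 := by simp [w, hg0]
    exact le_antisymm (sub_nonpos.2 hge) (hw0.symm.trans_le hle)
  have hsecond : deriv (deriv w) 0 = 0 := by
    rw [hzero.deriv.deriv_eq]; simp
  linarith [hw'.deriv]

section SecondDiff

variable {E : Type*} [NormedAddCommGroup E] [NormedSpace ℝ E] {ψ : E → ℝ}

lemma hasDerivAt_add_smul (hψ : Differentiable ℝ ψ) (x e : E) (t : ℝ) :
    HasDerivAt (fun t : ℝ => ψ (x + t • e)) (fderiv ℝ ψ (x + t • e) e) t := by
  have hline : HasDerivAt (fun t : ℝ => x + t • e) e t := by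
    simpa using ((hasDerivAt_id t).smul_const e).const_add x
  exact (hψ (x + t • e)).hasFDerivAt.comp_hasDerivAt t hline

lemma hasDerivAt_sub_smul (hψ : Differentiable ℝ ψ) (x e : E) (t : ℝ) :
    HasDerivAt (fun t : ℝ => ψ (x - t • e)) (-fderiv ℝ ψ (x - t • e) e) t := by
  simpa [sub_eq_add_neg] using hasDerivAt_add_smul hψ x (-e) t

lemma sum_fderiv_fderiv_le_of_secondDiff_le {ι : Type*} [Fintype ι] (hψ : ContDiff ℝ 2 ψ)
    {x : E} (e : ι → E) {C : ℝ}
    (h : ∀ᶠ t : ℝ in 𝓝 0, ∑ i, secondDiff ψ x (t • e i) ≤ C * t ^ 2) :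
    ∑ i, fderiv ℝ (fun y => fderiv ℝ ψ y (e i)) x (e i) ≤ C := by
  have hψ1 : Differentiable ℝ ψ := hψ.differentiable two_ne_zero
  have hψ2 (i : ι) : Differentiable ℝ fun y => fderiv ℝ ψ y (e i) := fun y =>
    ((hψ.fderiv_right (m := 1) le_rfl).differentiable one_ne_zero y).clm_apply
      (differentiableAt_const _)
  have hg (t : ℝ) : HasDerivAt (fun t : ℝ => ∑ i, secondDiff ψ x (t • e i))
      (∑ i, (fderiv ℝ ψ (x + t • e i) (e i) - fderiv ℝ ψ (x - t • e i) (e i))) t := by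
    simpa only [← sub_eq_add_neg, secondDiff] using HasDerivAt.fun_sum (u := Finset.univ) fun i _ =>
      ((hasDerivAt_add_smul hψ1 x (e i) t).fun_add (hasDerivAt_sub_smul hψ1 x (e i) t)).sub_const
        (2 * ψ x)
  have hdg := funext fun t => (hg t).deriv
  have hg' : HasDerivAt (deriv fun t : ℝ => ∑ i, secondDiff ψ x (t • e i))
      (2 * ∑ i, fderiv ℝ (fun y => fderiv ℝ ψ y (e i)) x (e i)) 0 := by
    rw [hdg, Finset.mul_sum]
    simpa [two_mul] using HasDerivAt.fun_sum (u := Finset.univ) fun i _ =>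
      (hasDerivAt_add_smul (hψ2 i) x (e i) 0).fun_sub (hasDerivAt_sub_smul (hψ2 i) x (e i) 0)
  have := deriv_deriv_le_of_eventually_le_mul_sq (fun t => (hg t).differentiableAt)
    hg'.differentiableAt (by simp [secondDiff, two_mul]) (by simp [hdg]) h
  linarith [hg'.deriv]

end SecondDiff

section Mollify

variable {E : Type*} [NormedAddCommGroup E] [NormedSpace ℝ E] [HasContDiffBump E]
  [MeasurableSpace E] {b : ContDiffBump (0 : E)} {μ : Measure E} {φ : E → ℝ} {x : E} {C : ℝ}

/-- The mollification of `φ` by the normalized bump function `b`: the value at `x` is an average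
of `φ` over the ball of radius `b.rOut` around `x`. -/
noncomputable def mollify (b : ContDiffBump (0 : E)) (μ : Measure E) (φ : E → ℝ) : E → ℝ :=
  convolution (b.normed μ) φ (ContinuousLinearMap.lsmul ℝ ℝ) μ

lemma mollify_apply : mollify b μ φ x = ∫ y, b.normed μ y * φ (x - y) ∂μ := rfl

lemma mollify_nonneg (hφ : ∀ x, 0 ≤ φ x) : 0 ≤ mollify b μ φ x :=
  integral_nonneg fun y => mul_nonneg (b.nonneg_normed y) (hφ _)

variable [BorelSpace E] [FiniteDimensional ℝ E] [μ.IsAddHaarMeasure]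

lemma contDiff_mollify (hφ : Continuous φ) {n : ℕ∞} : ContDiff ℝ n (mollify b μ φ) :=
  b.hasCompactSupport_normed.contDiff_convolution_left _ b.contDiff_normed hφ.locallyIntegrable

lemma integrable_normed_mul_sub (hφ : Continuous φ) :
    Integrable (fun y => b.normed μ y * φ (x - y)) μ :=
  (b.continuous_normed.mul (by fun_prop)).integrable_of_hasCompactSupport
    b.hasCompactSupport_normed.mul_right

lemma mollify_le (hφ : Continuous φ) (h : ∀ z ∈ ball x b.rOut, φ z ≤ C) :
    mollify b μ φ x ≤ C := by
  calc mollify b μ φ x ≤ ∫ y, b.normed μ y * C ∂μ := by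
        refine integral_mono (integrable_normed_mul_sub hφ) (b.integrable_normed.mul_const C)
          fun y => ?_
        by_cases hy : y ∈ ball (0 : E) b.rOut
        · exact mul_le_mul_of_nonneg_left (h _ (by simpa [dist_eq_norm] using hy))
            (b.nonneg_normed y)
        · have : b.normed μ y = 0 := by
            rwa [← b.support_normed_eq (μ := μ), Function.notMem_support] at hy
          simp [this]
    _ = C := by rw [integral_mul_const, b.integral_normed, one_mul]

lemma sum_secondDiff_mollify {ι : Type*} [Fintype ι] (hφ : Continuous φ) (v : ι → E) :
    ∑ i, secondDiff (mollify b μ φ) x (v i) =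
      mollify b μ (fun z => ∑ i, secondDiff φ z (v i)) x := by
  have hint (z : E) := integrable_normed_mul_sub (b := b) (μ := μ) (x := z) hφ
  have hsecond (w : E) : Integrable (fun y => b.normed μ y * secondDiff φ (x - y) w) μ :=
    integrable_normed_mul_sub (φ := fun z => secondDiff φ z w) (by unfold secondDiff; fun_prop)
  simp only [mollify_apply, Finset.mul_sum]
  rw [integral_finsetSum _ fun i _ => hsecond (v i)]
  refine Finset.sum_congr rfl fun i _ => ?_
  simp only [secondDiff, mollify_apply]
  rw [← integral_add (hint _) (hint _), ← integral_const_mul,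
    ← integral_sub ((hint _).fun_add (hint _)) ((hint _).const_mul 2)]
  congr 1 with y
  rw [sub_add_eq_add_sub, sub_right_comm x y]
  ring

end Mollify

lemma laplacian_mollify_le {b : ContDiffBump (0 : ℝ²)} {φ : ℝ² → ℝ} (hφ : Continuous φ)
    {x : ℝ²} {C r : ℝ} (hr : 0 < r) (h : ∀ z ∈ ball x b.rOut, ∀ t : ℝ, |t| < r →
      ∑ i, secondDiff φ z (t • EuclideanSpace.single i 1) ≤ C * t ^ 2) :
    laplacian (mollify b volume φ) x ≤ C := by
  refine sum_fderiv_fderiv_le_of_secondDiff_le (contDiff_mollify hφ)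
    (fun i => EuclideanSpace.single i 1) ?_
  filter_upwards [ball_mem_nhds 0 hr] with t ht
  rw [sum_secondDiff_mollify hφ]
  exact mollify_le (by unfold secondDiff; fun_prop) fun z hz => h z hz t (by simpa using ht)

/-! ### Depth in a polytope -/

/-- An oriented affine hyperplane `{x | ⟪normal, x⟫ = offset}`, whose unit normal points to the
positive side. Finite families of these encode polytopes as intersections of half-spaces. -/
structure OrientedHyperplane (E : Type*) [NormedAddCommGroup E] [InnerProductSpace ℝ E] where
  normal : E
  offset : ℝ
  norm_normal : ‖normal‖ = 1

namespace OrientedHyperplane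

variable {E : Type*} [NormedAddCommGroup E] [InnerProductSpace ℝ E] (h : OrientedHyperplane E)

/-- The signed distance of `x` to the hyperplane `h`, positive on the side of the normal. -/
noncomputable def height (x : E) : ℝ := ⟪h.normal, x⟫ - h.offset

/-- The orthogonal projection of `x` to the hyperplane `h`. -/
noncomputable def proj (x : E) : E := x - h.height x • h.normal

@[fun_prop]
lemma continuous_height : Continuous h.height := by unfold height; fun_prop

lemma height_add (x v : E) : h.height (x + v) = h.height x + ⟪h.normal, v⟫ := by
  simp only [height, inner_add_right]; ring

lemma height_add_smul_normal (x : E) (t : ℝ) : h.height (x + t • h.normal) = h.height x + t := by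
  rw [height_add, real_inner_smul_right, real_inner_self_eq_norm_sq, h.norm_normal]; ring

lemma height_combo (x y : E) {a b : ℝ} (hab : a + b = 1) :
    h.height (a • x + b • y) = a * h.height x + b * h.height y := by
  simp only [height, inner_add_right, real_inner_smul_right]
  linear_combination h.offset * hab

lemma height_le_add_dist (x y : E) : h.height x ≤ h.height y + dist x y := by
  have hinner : ⟪h.normal, x - y⟫ ≤ ‖x - y‖ := by
    simpa [h.norm_normal] using real_inner_le_norm h.normal (x - y)
  have := h.height_add y (x - y)
  rw [add_sub_cancel] at this
  rw [this, dist_eq_norm]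
  gcongr

lemma inner_normal_le_one (h k : OrientedHyperplane E) : ⟪k.normal, h.normal⟫ ≤ 1 := by
  simpa [h.norm_normal, k.norm_normal] using real_inner_le_norm k.normal h.normal

lemma height_proj_apply (h k : OrientedHyperplane E) (x : E) :
    k.height (h.proj x) = k.height x - h.height x * ⟪k.normal, h.normal⟫ := by
  rw [proj, sub_eq_add_neg, height_add, inner_neg_right, real_inner_smul_right, sub_eq_add_neg]

lemma height_proj (x : E) : h.height (h.proj x) = 0 := by
  rw [proj, sub_eq_add_neg, ← neg_smul, height_add_smul_normal, add_neg_cancel]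

lemma proj_add_smul_normal (x : E) (t : ℝ) : h.proj (x + t • h.normal) = h.proj x := by
  rw [proj, proj, height_add_smul_normal, add_smul, add_sub_add_right_eq_sub]

lemma proj_proj (x : E) : h.proj (h.proj x) = h.proj x := by
  rw [proj, height_proj, zero_smul, sub_zero]

end OrientedHyperplane

section Depth

open OrientedHyperplane

variable {E : Type*} [NormedAddCommGroup E] [InnerProductSpace ℝ E]
  {S : Finset (OrientedHyperplane E)} {hS : S.Nonempty} {x : E}

/-- The depth of `x` in the polytope cut out by the family `S`, i.e. the least signed distance to
its hyperplanes. It is the distance to the boundary if `x` lies inside, and negative outside. -/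
noncomputable def depth (S : Finset (OrientedHyperplane E)) (hS : S.Nonempty) (x : E) : ℝ :=
  S.inf' hS (·.height x)

lemma depth_le_height {h : OrientedHyperplane E} (hh : h ∈ S) : depth S hS x ≤ h.height x :=
  Finset.inf'_le _ hh

lemma exists_depth_eq_height (S : Finset (OrientedHyperplane E)) (hS : S.Nonempty) (x : E) :
    ∃ h ∈ S, depth S hS x = h.height x :=
  Finset.exists_mem_eq_inf' hS _

@[fun_prop]
lemma continuous_depth : Continuous (depth S hS) :=
  Continuous.finset_inf'_apply hS fun h _ => h.continuous_height

lemma depth_le_add_dist (x y : E) : depth S hS x ≤ depth S hS y + dist x y := by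
  obtain ⟨h, hh, hy⟩ := exists_depth_eq_height S hS y
  exact hy ▸ (depth_le_height hh).trans (h.height_le_add_dist x y)

lemma le_depth_combo (x y : E) {a b : ℝ} (ha : 0 ≤ a) (hb : 0 ≤ b) (hab : a + b = 1) :
    a * depth S hS x + b * depth S hS y ≤ depth S hS (a • x + b • y) := by
  refine Finset.le_inf' _ _ fun h hh => ?_
  rw [h.height_combo x y hab]
  gcongr <;> exact depth_le_height hh

lemma depth_le_inradius [Nontrivial E] {Ω : Set E} (hΩb : Bornology.IsBounded Ω)
    (hP : ∀ x, 0 < depth S hS x → x ∈ Ω) (x : E) : depth S hS x ≤ inradius Ω := by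
  refine le_inradius_of_ball_subset hΩb (x := x) fun y hy => hP y ?_
  linarith [depth_le_add_dist (S := S) (hS := hS) x y, mem_ball'.1 hy]

-- A half-space `h` nearest to `x` supports the concave function `depth` at `x`.
lemma secondDiff_comp_depth_le {g : ℝ → ℝ} {m : ℝ} (hg : MonotoneOn g (Iic m))
    {h : OrientedHyperplane E} (hh : h ∈ S)
    (hx : depth S hS x = h.height x) {v : E} (hv : depth S hS x + ‖v‖ ≤ m) :
    secondDiff (g ∘ depth S hS) x v ≤ secondDiff g (depth S hS x) ⟪h.normal, v⟫ := by
  have hinner : |⟪h.normal, v⟫| ≤ ‖v‖ := by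
    simpa [h.norm_normal] using abs_real_inner_le_norm h.normal v
  have hle (w : E) : depth S hS (x + w) ≤ depth S hS x + ⟪h.normal, w⟫ := by
    rw [hx, ← h.height_add]; exact depth_le_height hh
  have hmono {w : E} (hw : depth S hS x + ⟪h.normal, w⟫ ≤ m) :
      g (depth S hS (x + w)) ≤ g (depth S hS x + ⟪h.normal, w⟫) :=
    hg ((hle w).trans hw) hw (hle w)
  have hpos := hmono (w := v) (by linarith [le_abs_self ⟪h.normal, v⟫])
  have hneg := hmono (w := -v) (by rw [inner_neg_right]; linarith [neg_abs_le ⟪h.normal, v⟫])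
  rw [inner_neg_right, ← sub_eq_add_neg, ← sub_eq_add_neg] at hneg
  simp only [secondDiff, Function.comp_apply]
  gcongr

end Depth

/-! ### The barrier -/

/-- The `C¹` profile vanishing on `(-∞, 0]` whose second derivative is `K / ε` on `(0, ε)` and `-1`
on `(ε, ∞)`. Its slope rises to `K` at `ε` and returns to `0` at `K + ε`. -/
noncomputable def profile (K ε t : ℝ) : ℝ :=
  K / (2 * ε) * max t 0 ^ 2 - (K / ε + 1) / 2 * max (t - ε) 0 ^ 2

section Profile

variable {K ε t s : ℝ}

@[fun_prop]
lemma continuous_profile : Continuous (profile K ε) := by unfold profile; fun_prop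

lemma profile_of_nonpos (hε : 0 < ε) (ht : t ≤ 0) : profile K ε t = 0 := by
  simp [profile, max_eq_right ht, max_eq_right (show t - ε ≤ 0 by linarith)]

lemma profile_of_mem_Icc (ht : t ∈ Icc 0 ε) : profile K ε t = K / (2 * ε) * t ^ 2 := by
  simp [profile, max_eq_left ht.1, ht.2]

lemma profile_of_le (hε : 0 < ε) (ht : ε ≤ t) :
    profile K ε t = K * t - K * ε / 2 - (t - ε) ^ 2 / 2 := by
  rw [profile, max_eq_left (hε.le.trans ht), max_eq_left (sub_nonneg.2 ht)]
  field_simp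
  ring

lemma monotoneOn_profile (hK : 0 ≤ K) (hε : 0 < ε) : MonotoneOn (profile K ε) (Iic (K + ε)) := by
  have hzero : MonotoneOn (profile K ε) (Iic 0) := fun x hx y hy _ => by
    rw [profile_of_nonpos hε hx, profile_of_nonpos hε hy]
  have hconvex : MonotoneOn (profile K ε) (Icc 0 ε) := fun x hx y hy hxy => by
    rw [profile_of_mem_Icc hx, profile_of_mem_Icc hy]
    have := hx.1
    gcongr
  have hconcave : MonotoneOn (profile K ε) (Icc ε (K + ε)) := fun x hx y hy hxy => by
    rw [profile_of_le hε hx.1, profile_of_le hε hy.1]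
    nlinarith [mul_nonneg (sub_nonneg.2 hxy) (sub_nonneg.2 hy.2),
      mul_nonneg (sub_nonneg.2 hxy) (sub_nonneg.2 hx.2)]
  have := hzero.union_right hconvex isGreatest_Iic (isLeast_Icc hε.le)
  rw [Iic_union_Icc_eq_Iic hε.le] at this
  simpa [Iic_union_Icc_eq_Iic, hK] using
    this.union_right hconcave isGreatest_Iic (isLeast_Icc (by linarith))

lemma profile_nonneg (hK : 0 ≤ K) (hε : 0 < ε) (ht : t ≤ K + ε) : 0 ≤ profile K ε t := by
  rcases le_total t 0 with ht0 | ht0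
  · rw [profile_of_nonpos hε ht0]
  · rw [← profile_of_nonpos (K := K) hε le_rfl]
    exact monotoneOn_profile hK hε (ht0.trans ht) ht ht0

lemma secondDiff_max_sq_mem_Icc (t s : ℝ) :
    secondDiff (fun u => max u 0 ^ 2) t s ∈ Icc 0 (2 * s ^ 2) := by
  unfold secondDiff
  constructor <;> rcases le_total (t + s) 0 with h₁ | h₁ <;>
    rcases le_total (t - s) 0 with h₂ | h₂ <;> rcases le_total t 0 with h₃ | h₃ <;>
    simp only [max_eq_left, max_eq_right, h₁, h₂, h₃] <;>
    nlinarith [sq_nonneg (t + s), sq_nonneg (t - s), sq_nonneg s]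

lemma secondDiff_profile_le (hK : 0 ≤ K) (hε : 0 < ε) (t s : ℝ) :
    secondDiff (profile K ε) t s ≤ K / ε * s ^ 2 := by
  have hsplit : secondDiff (profile K ε) t s =
      K / (2 * ε) * secondDiff (fun u => max u 0 ^ 2) t s -
        (K / ε + 1) / 2 * secondDiff (fun u => max u 0 ^ 2) (t - ε) s := by
    simp only [secondDiff, profile, add_sub_right_comm, sub_right_comm t s]
    ring
  calc secondDiff (profile K ε) t s ≤ K / (2 * ε) * (2 * s ^ 2) - (K / ε + 1) / 2 * 0 := by
        rw [hsplit]
        gcongr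
        · exact (secondDiff_max_sq_mem_Icc t s).2
        · exact (secondDiff_max_sq_mem_Icc (t - ε) s).1
    _ = K / ε * s ^ 2 := by field_simp; ring

lemma secondDiff_profile_of_le (hε : 0 < ε) (ht : ε + |s| ≤ t) :
    secondDiff (profile K ε) t s = -s ^ 2 := by
  have := le_abs_self s
  have := neg_abs_le s
  rw [secondDiff, profile_of_le hε (by linarith), profile_of_le hε (by linarith),
    profile_of_le hε (by linarith)]
  ring

end Profile

section Barrier

variable {S : Finset (OrientedHyperplane ℝ²)} {hS : S.Nonempty} {K ε δ : ℝ}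

/-- The superharmonic-like test function of the proof: a mollification at scale `δ` of the profile
of the depth, shifted by `2 * δ` so that the support stays inside the polytope. -/
noncomputable def barrier (S : Finset (OrientedHyperplane ℝ²)) (hS : S.Nonempty) (K ε : ℝ)
    {δ : ℝ} (hδ : 0 < δ) : ℝ² → ℝ :=
  mollify ⟨δ / 2, δ, half_pos hδ, half_lt_self hδ⟩ volume
    ((fun t => profile K ε (t - 2 * δ)) ∘ depth S hS)

lemma continuous_profile_comp_depth :
    Continuous ((fun t => profile K ε (t - 2 * δ)) ∘ depth S hS) := by
  fun_prop

lemma contDiff_barrier (hδ : 0 < δ) : ContDiff ℝ 2 (barrier S hS K ε hδ) :=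
  contDiff_mollify continuous_profile_comp_depth

lemma barrier_nonneg (hK : 0 ≤ K) (hε : 0 < ε) (hδ : 0 < δ) (hdepth : ∀ x, depth S hS x ≤ K)
    (x : ℝ²) : 0 ≤ barrier S hS K ε hδ x :=
  mollify_nonneg fun z => profile_nonneg hK hε (by linarith [hdepth z])

lemma tsupport_barrier_subset (hε : 0 < ε) (hδ : 0 < δ) :
    tsupport (barrier S hS K ε hδ) ⊆ {x | δ ≤ depth S hS x} := by
  refine closure_minimal (fun x hx => ?_) (isClosed_le continuous_const continuous_depth)
  contrapose! hx
  have hzero (z) (hz : z ∈ ball x δ) : profile K ε (depth S hS z - 2 * δ) = 0 := by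
    refine profile_of_nonpos hε ?_
    linarith [depth_le_add_dist (S := S) (hS := hS) z x, mem_ball.1 hz,
      show depth S hS x < δ from not_le.1 hx]
  rw [Function.notMem_support, barrier, mollify, ContDiffBump.normed_convolution_eq_right]
  · exact hzero x (mem_ball_self hδ)
  · intro z hz
    exact (hzero z hz).trans (hzero x (mem_ball_self hδ)).symm

lemma sum_sq_inner_smul_single {ι : Type*} [Fintype ι] [DecidableEq ι] (v : EuclideanSpace ℝ ι)
    (t : ℝ) : ∑ i, ⟪v, t • EuclideanSpace.single i (1 : ℝ)⟫ ^ 2 = ‖v‖ ^ 2 * t ^ 2 := by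
  simp [real_inner_smul_right, EuclideanSpace.inner_single_right, mul_pow,
    EuclideanSpace.norm_sq_eq, ← Finset.mul_sum, mul_comm]

lemma laplacian_barrier_le_of_secondDiff_le {C r : ℝ} (hK : 0 ≤ K) (hε : 0 < ε) (hδ : 0 < δ)
    (hdepth : ∀ x, depth S hS x ≤ K) {x : ℝ²} (hr : 0 < r)
    (h : ∀ z ∈ ball x δ, ∀ s, |s| < r →
      secondDiff (profile K ε) (depth S hS z - 2 * δ) s ≤ C * s ^ 2) :
    laplacian (barrier S hS K ε hδ) x ≤ C := by
  refine laplacian_mollify_le continuous_profile_comp_depth (lt_min hr hε) fun z hz t ht => ?_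
  obtain ⟨k, hk, hzk⟩ := exists_depth_eq_height S hS z
  have hmono : MonotoneOn (fun t => profile K ε (t - 2 * δ)) (Iic (K + ε)) := fun u hu v hv huv =>
    monotoneOn_profile hK hε (by grind) (by grind) (by gcongr)
  have hnorm (i : Fin 2) : ‖t • EuclideanSpace.single i (1 : ℝ)‖ = |t| := by simp [norm_smul]
  have htε : |t| < ε := ht.trans_le (min_le_right _ _)
  have hinner (i : Fin 2) : |⟪k.normal, t • EuclideanSpace.single i (1 : ℝ)⟫| < r := by
    refine (abs_real_inner_le_norm _ _).trans_lt ?_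
    rw [k.norm_normal, one_mul, hnorm]
    exact ht.trans_le (min_le_left _ _)
  calc _ ≤ ∑ i, C * ⟪k.normal, t • EuclideanSpace.single i (1 : ℝ)⟫ ^ 2 := by
        refine Finset.sum_le_sum fun i _ => ?_
        refine (secondDiff_comp_depth_le hmono hk hzk
          (by rw [hnorm]; linarith [hdepth z])).trans ?_
        refine le_trans (le_of_eq ?_) (h z hz _ (hinner i))
        simp only [secondDiff, add_sub_right_comm, sub_right_comm]
    _ = C * t ^ 2 := by
        rw [← Finset.mul_sum, sum_sq_inner_smul_single, k.norm_normal, one_pow, one_mul]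

lemma laplacian_barrier_le (hK : 0 ≤ K) (hε : 0 < ε) (hδ : 0 < δ)
    (hdepth : ∀ x, depth S hS x ≤ K) (x : ℝ²) : laplacian (barrier S hS K ε hδ) x ≤ K / ε :=
  laplacian_barrier_le_of_secondDiff_le hK hε hδ hdepth one_pos fun _ _ _ _ =>
    secondDiff_profile_le hK hε _ _

lemma laplacian_barrier_le_neg_one (hK : 0 ≤ K) (hε : 0 < ε) (hδ : 0 < δ)
    (hdepth : ∀ x, depth S hS x ≤ K) {x : ℝ²} (hx : ε + 4 * δ < depth S hS x) :
    laplacian (barrier S hS K ε hδ) x ≤ -1 := by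
  refine laplacian_barrier_le_of_secondDiff_le hK hε hδ hdepth hδ fun z hz s hs => ?_
  have hxz := depth_le_add_dist (S := S) (hS := hS) x z
  rw [secondDiff_profile_of_le hε (by linarith [mem_ball'.1 hz]), neg_one_mul]

end Barrier

section Comparison

variable {Ω : Set ℝ²} {f : ℝ² → ℝ}

lemma setIntegral_le_mul_setIntegral_of_laplacian_le (hΩo : IsOpen Ω)
    (hf0 : ∀ x ∈ Ω, 0 ≤ f x) (hfi : IntegrableOn f Ω)
    (hf : ∀ x ∈ Ω, DifferentiableAt ℝ f x)
    (hf' : ∀ x ∈ Ω, DifferentiableAt ℝ (fun y => fderiv ℝ f y) x)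
    (hsub : ∀ x ∈ Ω, 0 ≤ laplacian f x) {ψ : ℝ² → ℝ} (hψ : ContDiff ℝ 2 ψ)
    (hψc : HasCompactSupport ψ) (hψ0 : ∀ x, 0 ≤ ψ x) {A B : Set ℝ²} (hA : MeasurableSet A)
    (hB : MeasurableSet B) (hAB : Disjoint A B) (hABΩ : A ∪ B ⊆ Ω) (hψAB : tsupport ψ ⊆ A ∪ B)
    {C : ℝ} (hψA : ∀ x ∈ A, laplacian ψ x ≤ -1) (hψB : ∀ x ∈ B, laplacian ψ x ≤ C) :
    ∫ x in A, f x ≤ C * ∫ x in B, f x := by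
  have hΔ : ∀ x ∉ A ∪ B, laplacian ψ x = 0 := fun x hx =>
    image_eq_zero_of_notMem_tsupport fun h => hx (hψAB (tsupport_laplacian_subset ψ h))
  have hΔc : HasCompactSupport (laplacian ψ) :=
    hψc.of_isClosed_subset (isClosed_tsupport _) (tsupport_laplacian_subset ψ)
  have hint : Integrable fun x => f x * laplacian ψ x :=
    (continuous_mul_of_tsupport_subset hΩo (fun x hx => (hf x hx).continuousAt.continuousWithinAt)
      (continuous_laplacian hψ) ((tsupport_laplacian_subset ψ).trans
        (hψAB.trans hABΩ))).integrable_of_hasCompactSupport hΔc.mul_left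
  have hAf : IntegrableOn f A := hfi.mono_set (subset_union_left.trans hABΩ)
  have hBf : IntegrableOn f B := hfi.mono_set (subset_union_right.trans hABΩ)
  have hgreen : 0 ≤ ∫ x, f x * laplacian ψ x :=
    integral_mul_laplacian_nonneg hΩo hf hf' hsub hψ hψc (hψAB.trans hABΩ) hψ0
  have hupper : ∫ x, f x * laplacian ψ x ≤ (∫ x in A, -f x) + ∫ x in B, C * f x := by
    rw [← setIntegral_eq_integral_of_forall_compl_eq_zero (s := A ∪ B)
      fun x hx => by rw [hΔ x hx, mul_zero],
      setIntegral_union hAB hB hint.integrableOn hint.integrableOn]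
    refine add_le_add (setIntegral_mono_on hint.integrableOn hAf.neg hA fun x hx => ?_)
      (setIntegral_mono_on hint.integrableOn (hBf.const_mul C) hB fun x hx => ?_)
    · linarith [mul_le_mul_of_nonneg_left (hψA x hx) (hf0 x (hABΩ (.inl hx)))]
    · linarith [mul_le_mul_of_nonneg_left (hψB x hx) (hf0 x (hABΩ (.inr hx)))]
  rw [integral_neg, integral_const_mul] at hupper
  linarith

variable {S : Finset (OrientedHyperplane ℝ²)} {hS : S.Nonempty} {ε τ : ℝ}

lemma setIntegral_lt_depth_le_of_lt (hΩo : IsOpen Ω) (hΩb : Bornology.IsBounded Ω)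
    (hf0 : ∀ x ∈ Ω, 0 ≤ f x) (hfi : IntegrableOn f Ω)
    (hf : ∀ x ∈ Ω, DifferentiableAt ℝ f x)
    (hf' : ∀ x ∈ Ω, DifferentiableAt ℝ (fun y => fderiv ℝ f y) x)
    (hsub : ∀ x ∈ Ω, 0 ≤ laplacian f x) (hP : ∀ x, 0 < depth S hS x → x ∈ Ω)
    (hε : 0 < ε) (hετ : ε < τ) :
    ∫ x in {x | τ < depth S hS x}, f x ≤
      inradius Ω / ε * ∫ x in {x | depth S hS x ∈ Ioc 0 τ}, f x := by
  have hδ : 0 < (τ - ε) / 4 := by linarith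
  have hK : 0 ≤ inradius Ω := inradius_nonneg Ω
  have hdepth := depth_le_inradius hΩb hP
  have hunion : {x | τ < depth S hS x} ∪ {x | depth S hS x ∈ Ioc 0 τ} = {x | 0 < depth S hS x} := by
    ext x; simp only [mem_union, mem_ofPred_eq, mem_Ioc]; grind
  have hsupp : tsupport (barrier S hS (inradius Ω) ε hδ) ⊆ {x | 0 < depth S hS x} :=
    (tsupport_barrier_subset hε hδ).trans fun x hx => hδ.trans_le hx
  refine setIntegral_le_mul_setIntegral_of_laplacian_le hΩo hf0 hfi hf hf' hsub
    (contDiff_barrier hδ)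
    (hΩb.isCompact_closure.of_isClosed_subset (isClosed_tsupport _)
      (hsupp.trans fun x hx => subset_closure (hP x hx)))
    (barrier_nonneg hK hε hδ hdepth)
    (measurableSet_lt measurable_const continuous_depth.measurable)
    (continuous_depth.measurable measurableSet_Ioc)
    (disjoint_left.2 fun x hx hx' => not_lt.2 hx'.2 hx)
    (hunion.trans_subset hP) (hsupp.trans_eq hunion.symm)
    (fun x hx => laplacian_barrier_le_neg_one hK hε hδ hdepth ?_)
    fun x _ => laplacian_barrier_le hK hε hδ hdepth x
  rwa [mul_div_cancel₀ _ four_ne_zero, add_sub_cancel]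

lemma setIntegral_lt_depth_le (hΩo : IsOpen Ω) (hΩb : Bornology.IsBounded Ω)
    (hf0 : ∀ x ∈ Ω, 0 ≤ f x) (hfi : IntegrableOn f Ω)
    (hf : ∀ x ∈ Ω, DifferentiableAt ℝ f x)
    (hf' : ∀ x ∈ Ω, DifferentiableAt ℝ (fun y => fderiv ℝ f y) x)
    (hsub : ∀ x ∈ Ω, 0 ≤ laplacian f x) (hP : ∀ x, 0 < depth S hS x → x ∈ Ω) (hτ : 0 < τ) :
    ∫ x in {x | τ < depth S hS x}, f x ≤
      inradius Ω / τ * ∫ x in {x | depth S hS x ∈ Ioc 0 τ}, f x := by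
  have hlim : Tendsto (fun ε => inradius Ω / ε * ∫ x in {x | depth S hS x ∈ Ioc 0 τ}, f x)
      (𝓝[<] τ) (𝓝 (inradius Ω / τ * ∫ x in {x | depth S hS x ∈ Ioc 0 τ}, f x)) :=
    ((tendsto_const_nhds.div (tendsto_id.mono_left nhdsWithin_le_nhds) hτ.ne').mul_const _)
  refine ge_of_tendsto hlim ?_
  filter_upwards [Ioo_mem_nhdsLT hτ] with ε hε
  exact setIntegral_lt_depth_le_of_lt hΩo hΩb hf0 hfi hf hf' hsub hP hε.1 hε.2

end Comparison

/-! ### Integration over boundary layers -/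

lemma lintegral_le_setLIntegral_hausdorffMeasure {X : Type*} [MetricSpace X] [MeasurableSpace X]
    [BorelSpace X] {τ : X → ℝ} (hτ : LipschitzWith 1 τ) {A : Set X} (hA : MeasurableSet A)
    {u : ℝ → ℝ≥0∞} {F : X → ℝ≥0∞} (hu : ∀ t, u t ≠ 0 → t ∈ τ '' A)
    (huF : ∀ p ∈ A, u (τ p) ≤ F p) : ∫⁻ t, u t ≤ ∫⁻ p in A, F p ∂μH[1] := by
  obtain ⟨v, hv, hvu, huv⟩ := exists_measurable_le_lintegral_eq volume u
  have hτm : Measurable τ := hτ.continuous.measurable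
  have hmap : volume.restrict (Function.support v) ≤ (μH[1].restrict A).map τ := by
    refine Measure.le_iff.2 fun B hB => ?_
    rw [Measure.restrict_apply hB, Measure.map_apply hτm hB, Measure.restrict_apply (hτm hB)]
    calc volume (B ∩ Function.support v) ≤ volume (τ '' (τ ⁻¹' B ∩ A)) := by
          refine measure_mono fun t ht => ?_
          obtain ⟨p, hp, rfl⟩ := hu t fun h => ht.2 (le_bot_iff.1 ((hvu t).trans_eq h))
          exact ⟨p, ⟨ht.1, hp⟩, rfl⟩
      _ ≤ μH[1] (τ ⁻¹' B ∩ A) := by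
          rw [← hausdorffMeasure_real]
          simpa using hτ.hausdorffMeasure_image_le zero_le_one (τ ⁻¹' B ∩ A)
  calc ∫⁻ t, u t = ∫⁻ t in Function.support v, v t := by
        rw [huv, setLIntegral_eq_of_support_subset subset_rfl]
    _ ≤ ∫⁻ t, v t ∂(μH[1].restrict A).map τ := lintegral_mono' hmap le_rfl
    _ = ∫⁻ p in A, v (τ p) ∂μH[1] := lintegral_map hv hτm
    _ ≤ ∫⁻ p in A, F p ∂μH[1] := setLIntegral_mono' hA fun p hp => (hvu _).trans (huF p hp)

lemma lintegral_prod_le_ofReal_mul_lintegral_iSup {g : ℝ × ℝ → ℝ≥0∞} (hg : AEMeasurable g)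
    {c τ : ℝ} (hgc : ∀ t s, g (t, s) ≠ 0 → s ∈ Ioc c (c + τ)) :
    ∫⁻ z, g z ≤ ENNReal.ofReal τ * ∫⁻ t, ⨆ s, g (t, s) := by
  rw [← lintegral_const_mul' _ _ ENNReal.ofReal_ne_top, Measure.volume_eq_prod,
    lintegral_prod _ hg]
  refine lintegral_mono fun t => ?_
  calc ∫⁻ s, g (t, s) ≤ ∫⁻ s, (Ioc c (c + τ)).indicator (fun _ => ⨆ s, g (t, s)) s := by
        refine lintegral_mono fun s => ?_
        by_cases hs : g (t, s) = 0
        · simp [hs]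
        · rw [indicator_of_mem (hgc t s hs)]
          exact le_iSup (fun s => g (t, s)) s
    _ = ENNReal.ofReal τ * ⨆ s, g (t, s) := by
        rw [lintegral_indicator_const measurableSet_Ioc, Real.volume_Ioc, mul_comm,
          add_sub_cancel_left]

section Slab

variable {n : ℝ²}

lemma exists_measurableEquiv_cross_inner (hn : ‖n‖ = 1) :
    ∃ Φ : ℝ² ≃ᵐ ℝ × ℝ, MeasurePreserving Φ ∧ ∀ x, Φ x = (cross n x, ⟪n, x⟫) := by
  have hn2 : n 0 ^ 2 + n 1 ^ 2 = 1 := by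
    rw [← Fin.sum_univ_two fun i => n i ^ 2, ← EuclideanSpace.real_norm_sq_eq, hn, one_pow]
  have horth : Orthonormal ℝ ![!₂[-n 1, n 0], n] := by
    rw [orthonormal_vecCons_iff]
    refine ⟨?_, ?_, by simpa [orthonormal_subsingleton_iff] using hn⟩
    · simpa [EuclideanSpace.norm_eq, add_comm] using hn2
    · simp [PiLp.inner_apply, mul_comm]
  let b : OrthonormalBasis (Fin 2) ℝ ℝ² := .mk horth
    (horth.linearIndependent.span_eq_top_of_card_eq_finrank (by simp)).ge
  refine ⟨(b.measurableEquiv.trans (MeasurableEquiv.toLp 2 (Fin 2 → ℝ)).symm).trans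
    MeasurableEquiv.finTwoArrow, (volume_preserving_finTwoArrow ℝ).comp
      ((EuclideanSpace.volume_preserving_symm_measurableEquiv_toLp (Fin 2)).comp
        b.measurePreserving_measurableEquiv), fun x => ?_⟩
  have hcross : b.repr x 0 = cross n x := by
    simp [b.repr_apply_apply, b, cross, PiLp.inner_apply]; ring
  have hinner : b.repr x 1 = ⟪n, x⟫ := by simp [b.repr_apply_apply, b]
  rw [← hcross, ← hinner]
  rfl

lemma lipschitzWith_cross (hn : ‖n‖ = 1) : LipschitzWith 1 (cross n) := by
  refine LipschitzWith.of_dist_le_mul fun x y => ?_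
  have hsub : cross n x - cross n y = cross n (x - y) := by simp only [cross, PiLp.sub_apply]; ring
  rw [Real.dist_eq, hsub, dist_eq_norm, NNReal.coe_one, one_mul]
  refine abs_le_of_sq_le_sq ?_ (norm_nonneg _)
  rw [cross_sq, hn, one_pow, one_mul]
  exact sub_le_self _ (sq_nonneg _)

lemma setLIntegral_le_of_inner_mem_Ioc (hn : ‖n‖ = 1) {c τ : ℝ} {R A : Set ℝ²}
    (hR : MeasurableSet R) (hA : MeasurableSet A) (hRc : ∀ x ∈ R, ⟪n, x⟫ ∈ Ioc c (c + τ))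
    {G F : ℝ² → ℝ≥0∞} (hG : AEMeasurable G (volume.restrict R))
    (hRA : ∀ x ∈ R, ∃ p ∈ A, cross n p = cross n x)
    (hGF : ∀ x ∈ R, ∀ p ∈ A, cross n p = cross n x → G x ≤ F p) :
    ∫⁻ x in R, G x ≤ ENNReal.ofReal τ * ∫⁻ p in A, F p ∂μH[1] := by
  obtain ⟨Φ, hΦ, hΦx⟩ := exists_measurableEquiv_cross_inner hn
  have hcoord (t s : ℝ) : cross n (Φ.symm (t, s)) = t ∧ ⟪n, Φ.symm (t, s)⟫ = s := by
    rw [← Prod.mk_inj, ← hΦx, Φ.apply_symm_apply]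
  calc ∫⁻ x in R, G x = ∫⁻ z, R.indicator G (Φ.symm z) := by
        rw [← lintegral_indicator hR, (hΦ.symm Φ).lintegral_comp_emb Φ.symm.measurableEmbedding]
    _ ≤ ENNReal.ofReal τ * ∫⁻ t, ⨆ s, R.indicator G (Φ.symm (t, s)) := by
        refine lintegral_prod_le_ofReal_mul_lintegral_iSup
          (((aemeasurable_indicator_iff hR).2 hG).comp_quasiMeasurePreserving
            (hΦ.symm Φ).quasiMeasurePreserving) (c := c) fun t s hs => ?_
        exact (hcoord t s).2 ▸ hRc _ (mem_of_indicator_ne_zero hs)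
    _ ≤ ENNReal.ofReal τ * ∫⁻ p in A, F p ∂μH[1] := by
        gcongr
        refine lintegral_le_setLIntegral_hausdorffMeasure (lipschitzWith_cross hn) hA
          (fun t ht => ?_) fun p hp => iSup_le fun s => ?_
        · obtain ⟨s, hs⟩ : ∃ s, R.indicator G (Φ.symm (t, s)) ≠ 0 := by simpa using ht
          obtain ⟨p, hp, hpx⟩ := hRA _ (mem_of_indicator_ne_zero hs)
          exact ⟨p, hp, hpx.trans (hcoord t s).1⟩
        · exact indicator_apply_le' (fun hx => hGF _ hx p hp (hcoord _ s).1.symm) fun _ => zero_le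

end Slab

lemma inter_frontier_nonempty_of_isPreconnected {X : Type*} [TopologicalSpace X] {s t : Set X}
    (ht : IsPreconnected t) (hts : (t ∩ s).Nonempty) (hts' : (t ∩ sᶜ).Nonempty) :
    (t ∩ frontier s).Nonempty := by
  by_contra hempty
  rw [not_nonempty_iff_eq_empty, ← disjoint_iff_inter_eq_empty,
    ← subset_compl_iff_disjoint_right, compl_frontier_eq_union_interior] at hempty
  obtain ⟨x, hxt, hxs⟩ := hts
  obtain ⟨y, hyt, hys⟩ := hts'
  have hx : x ∈ interior s := (hempty hxt).resolve_right fun h => interior_subset h hxs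
  have hy : y ∈ interior sᶜ := (hempty hyt).resolve_left fun h => hys (interior_subset h)
  obtain ⟨z, -, hz, hz'⟩ := ht _ _ isOpen_interior isOpen_interior hempty ⟨x, hxt, hx⟩ ⟨y, hyt, hy⟩
  exact interior_subset hz' (interior_subset hz)

section Shadow

open OrientedHyperplane

variable {E : Type*} [NormedAddCommGroup E] [InnerProductSpace ℝ E] {Ω : Set E}
  {S : Finset (OrientedHyperplane E)} {hS : S.Nonempty} {h k : OrientedHyperplane E} {x : E}

/-- The shadow on `frontier Ω` of the facet of the polytope `S` carried by `h`: the boundary points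
beyond `h` which project into the relative interior of that facet. -/
def shadow (Ω : Set E) (S : Finset (OrientedHyperplane E)) (h : OrientedHyperplane E) : Set E :=
  {p ∈ frontier Ω | h.height p ≤ 0 ∧ ∀ k ∈ S, k ≠ h → 0 < k.height (h.proj p)}

lemma measurableSet_shadow [MeasurableSpace E] [BorelSpace E] : MeasurableSet (shadow Ω S h) := by
  have hshadow : shadow Ω S h = frontier Ω ∩ ({p | h.height p ≤ 0} ∩
      ⋂ k ∈ S, {p | k ≠ h → 0 < k.height (h.proj p)}) := by
    ext; simp [shadow]; tauto
  have hproj : Continuous h.proj := by unfold proj; fun_prop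
  rw [hshadow]
  refine isClosed_frontier.measurableSet.inter
    ((isClosed_le h.continuous_height continuous_const).measurableSet.inter
      (S.measurableSet_biInter fun k _ => ?_))
  by_cases hk : k = h
  · simp [hk]
  · simpa [hk] using (isOpen_lt continuous_const (k.continuous_height.comp hproj)).measurableSet

lemma pairwiseDisjoint_shadow : (S : Set (OrientedHyperplane E)).PairwiseDisjoint (shadow Ω S) := by
  refine fun h hh k hk hhk => disjoint_left.2 ?_
  rintro p ⟨-, hph, hfoot_h⟩ ⟨-, hpk, hfoot_k⟩
  have hpos_k := hfoot_h k hk hhk.symm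
  have hpos_h := hfoot_k h hh hhk
  have hinner := inner_normal_le_one h k
  rw [height_proj_apply] at hpos_h hpos_k
  rw [real_inner_comm] at hpos_h
  nlinarith

lemma height_proj_pos_of_depth_eq (hx : 0 < depth S hS x) (hxh : depth S hS x = h.height x)
    (hk : k ∈ S) (hkh : k ≠ h) : 0 < k.height (h.proj x) := by
  have hle : h.height x ≤ k.height x := hxh ▸ depth_le_height hk
  rw [hxh] at hx
  rw [height_proj_apply]
  rcases (inner_normal_le_one h k).lt_or_eq with hinner | hinner
  · nlinarith
  · have hnormal : k.normal = h.normal :=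
      (inner_eq_one_iff_of_norm_eq_one k.norm_normal h.norm_normal).1 hinner
    have hne : h.height x ≠ k.height x := fun heq => hkh <| by
      have hoffset : k.offset = h.offset := by simpa [height, hnormal] using heq.symm
      cases h; cases k; simp_all
    rw [hinner, mul_one, sub_pos]
    exact hle.lt_of_ne hne

lemma depth_proj_nonneg (hx : 0 < depth S hS x) (hxh : depth S hS x = h.height x) :
    0 ≤ depth S hS (h.proj x) := by
  refine Finset.le_inf' _ _ fun k hk => ?_
  by_cases hkh : k = h
  · rw [hkh, height_proj]
  · exact (height_proj_pos_of_depth_eq hx hxh hk hkh).le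

lemma exists_add_neg_smul_mem_frontier (hΩb : Bornology.IsBounded Ω) {n : E}
    (hn : ‖n‖ = 1) (hx : x ∈ Ω) : ∃ t : ℝ, 0 ≤ t ∧ x + (-t) • n ∈ frontier Ω := by
  obtain ⟨M, hM⟩ := hΩb.exists_norm_le
  have hfar : x + (-(2 * M + 1)) • n ∉ Ω := fun hmem => by
    have := norm_le_norm_add_norm_sub' ((-(2 * M + 1)) • n) (x + (-(2 * M + 1)) • n)
    rw [norm_smul, hn, mul_one, sub_add_cancel_right, norm_neg, norm_neg] at this
    linarith [hM _ hmem, hM x hx, Real.le_norm_self (2 * M + 1)]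
  have hray : IsPreconnected ((fun t : ℝ => x + (-t) • n) '' Ici 0) :=
    isPreconnected_Ici.image _ (by fun_prop)
  obtain ⟨_, ⟨t, ht, rfl⟩, hmem⟩ := inter_frontier_nonempty_of_isPreconnected hray
    ⟨x, ⟨0, by simp, by simp⟩, hx⟩
    ⟨_, ⟨2 * M + 1, mem_Ici.2 (by linarith [norm_nonneg x, hM x hx]), rfl⟩, hfar⟩
  exact ⟨t, ht, hmem⟩

lemma exists_mem_shadow (hΩb : Bornology.IsBounded Ω)
    (hP : {x | 0 ≤ depth S hS x} ⊆ Ω) (hx : 0 < depth S hS x) (hxh : depth S hS x = h.height x) :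
    ∃ p ∈ shadow Ω S h, h.proj p = h.proj x := by
  obtain ⟨t, ht, hmem⟩ :=
    exists_add_neg_smul_mem_frontier hΩb h.norm_normal (hP (depth_proj_nonneg hx hxh))
  have hproj : h.proj (h.proj x + (-t) • h.normal) = h.proj x := by
    rw [proj_add_smul_normal, proj_proj]
  refine ⟨_, ⟨hmem, ?_, fun k hk hkh => ?_⟩, hproj⟩
  · rw [height_add_smul_normal, height_proj]; linarith
  · rw [hproj]; exact height_proj_pos_of_depth_eq hx hxh hk hkh

end Shadow

section Layer

open OrientedHyperplane

variable {Ω : Set ℝ²} {S : Finset (OrientedHyperplane ℝ²)} {hS : S.Nonempty} {τ : ℝ}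

lemma proj_eq_proj_iff_cross_eq {h : OrientedHyperplane ℝ²} {p x : ℝ²} :
    h.proj p = h.proj x ↔ cross h.normal p = cross h.normal x := by
  have hdiff : h.proj p - h.proj x = p - x - ⟪h.normal, p - x⟫ • h.normal := by
    simp only [proj, height, inner_sub_right]; module
  have hnorm : ‖h.proj p - h.proj x‖ ^ 2 = (cross h.normal p - cross h.normal x) ^ 2 := by
    have hcross : cross h.normal p - cross h.normal x = cross h.normal (p - x) := by
      simp only [cross, PiLp.sub_apply]; ring
    rw [hcross, cross_sq, hdiff, norm_sub_sq_real, norm_smul, h.norm_normal, real_inner_smul_right,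
      real_inner_comm, Real.norm_eq_abs, mul_one, sq_abs]
    ring
  rw [← sub_eq_zero, ← norm_eq_zero, ← sq_eq_zero_iff, hnorm, sq_eq_zero_iff, sub_eq_zero]

lemma setLIntegral_depth_mem_Ioc_le (hΩb : Bornology.IsBounded Ω)
    (hP : {x | 0 ≤ depth S hS x} ⊆ Ω) {G F : ℝ² → ℝ≥0∞} (hG : AEMeasurable G (volume.restrict Ω))
    (hGF : ∀ h ∈ S, ∀ x p, depth S hS x ∈ Ioc 0 τ → depth S hS x = h.height x →
      p ∈ frontier Ω → h.height p ≤ 0 → h.proj p = h.proj x → G x ≤ F p) :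
    ∫⁻ x in {x | depth S hS x ∈ Ioc 0 τ}, G x ≤
      ENNReal.ofReal τ * ∫⁻ p in frontier Ω, F p ∂μH[1] := by
  let R (h : OrientedHyperplane ℝ²) : Set ℝ² :=
    {x | depth S hS x ∈ Ioc 0 τ ∧ depth S hS x = h.height x}
  have hlayer : {x | depth S hS x ∈ Ioc 0 τ} ⊆ ⋃ h ∈ S, R h := fun x hx => by
    obtain ⟨h, hh, hxh⟩ := exists_depth_eq_height S hS x
    exact mem_biUnion hh ⟨hx, hxh⟩
  have hR (h : OrientedHyperplane ℝ²) : MeasurableSet (R h) :=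
    (continuous_depth.measurable measurableSet_Ioc).inter
      (isClosed_eq continuous_depth h.continuous_height).measurableSet
  have hfacet (h) (hh : h ∈ S) :
      ∫⁻ x in R h, G x ≤ ENNReal.ofReal τ * ∫⁻ p in shadow Ω S h, F p ∂μH[1] := by
    refine setLIntegral_le_of_inner_mem_Ioc h.norm_normal (c := h.offset) (hR h)
      measurableSet_shadow (fun x hx => ?_)
      (hG.mono_measure (Measure.restrict_mono_set _ fun x hx => hP hx.1.1.le))
      (fun x hx => ?_) fun x hx p hp hpx => ?_
    · have := hx.1
      rw [hx.2, height] at this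
      exact ⟨by linarith [this.1], by linarith [this.2]⟩
    · simpa only [proj_eq_proj_iff_cross_eq] using exists_mem_shadow hΩb hP hx.1.1 hx.2
    · exact hGF h hh x p hx.1 hx.2 hp.1 hp.2.1 (proj_eq_proj_iff_cross_eq.2 hpx)
  calc ∫⁻ x in {x | depth S hS x ∈ Ioc 0 τ}, G x ≤ ∫⁻ x in ⋃ h ∈ S, R h, G x :=
        lintegral_mono_set hlayer
    _ ≤ ∑ h ∈ S, ∫⁻ x in R h, G x := by
        rw [← Finset.tsum_subtype S fun h => ∫⁻ x in R h, G x]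
        exact (lintegral_mono_set (biUnion_eq_iUnion _ _).le).trans (lintegral_iUnion_le _ _)
    _ ≤ ∑ h ∈ S, ENNReal.ofReal τ * ∫⁻ p in shadow Ω S h, F p ∂μH[1] := Finset.sum_le_sum hfacet
    _ = ENNReal.ofReal τ * ∫⁻ p in ⋃ h ∈ S, shadow Ω S h, F p ∂μH[1] := by
        rw [← Finset.mul_sum,
          lintegral_biUnion_finset pairwiseDisjoint_shadow fun h _ => measurableSet_shadow]
    _ ≤ ENNReal.ofReal τ * ∫⁻ p in frontier Ω, F p ∂μH[1] := by
        gcongr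
        exact iUnion₂_subset fun h _ => sep_subset _ _

lemma setIntegral_depth_mem_Ioc_le (hΩb : Bornology.IsBounded Ω)
    (hP : {x | 0 ≤ depth S hS x} ⊆ Ω) (hτ : 0 ≤ τ) {f g : ℝ² → ℝ} (hf : IntegrableOn f Ω)
    (hf0 : ∀ x ∈ Ω, 0 ≤ f x) (hg : IntegrableOn g (frontier Ω) μH[1])
    (hg0 : ∀ p ∈ frontier Ω, 0 ≤ g p)
    (hfg : ∀ h ∈ S, ∀ x p, depth S hS x ∈ Ioc 0 τ → depth S hS x = h.height x →
      p ∈ frontier Ω → h.height p ≤ 0 → h.proj p = h.proj x → f x ≤ g p) :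
    ∫ x in {x | depth S hS x ∈ Ioc 0 τ}, f x ≤ τ * ∫ p in frontier Ω, g p ∂μH[1] := by
  have hsub : {x | depth S hS x ∈ Ioc 0 τ} ⊆ Ω := fun x hx => hP hx.1.le
  have hlayer : MeasurableSet {x | depth S hS x ∈ Ioc 0 τ} :=
    continuous_depth.measurable measurableSet_Ioc
  have hg0' : 0 ≤ᵐ[μH[1].restrict (frontier Ω)] g :=
    (ae_restrict_iff' isClosed_frontier.measurableSet).2 (.of_forall hg0)
  rw [← ENNReal.ofReal_le_ofReal_iff (mul_nonneg hτ (integral_nonneg_of_ae hg0')),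
    ENNReal.ofReal_mul hτ, ofReal_integral_eq_lintegral_ofReal hg hg0',
    ofReal_integral_eq_lintegral_ofReal (hf.mono_set hsub)
      ((ae_restrict_iff' hlayer).2 (.of_forall fun x hx => hf0 x (hsub hx)))]
  exact setLIntegral_depth_mem_Ioc_le hΩb hP hf.aemeasurable.ennreal_ofReal
    fun h hh x p hx hxh hp hph hproj =>
      ENNReal.ofReal_le_ofReal (hfg h hh x p hx hxh hp hph hproj)

end Layer

/-! ### Inscribed polytopes -/

section InscribedPolytope

open OrientedHyperplane

variable {E : Type*} [NormedAddCommGroup E] [InnerProductSpace ℝ E] {Ω Q : Set E}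
  {S : Finset (OrientedHyperplane E)} {hS : S.Nonempty} {c : E} {a : ℝ}

lemma exists_orientedHyperplane_separating [CompleteSpace E] (hQc : IsClosed Q) (hQ : Convex ℝ Q)
    (hQne : Q.Nonempty) {y : E} (hy : y ∉ Q) :
    ∃ h : OrientedHyperplane E, (∀ x ∈ Q, 0 ≤ h.height x) ∧ h.height y < 0 := by
  obtain ⟨g, u, hgu, hug⟩ := geometric_hahn_banach_closed_point hQ hQc hy
  set w := (InnerProductSpace.toDual ℝ E).symm g
  have hw (x : E) : ⟪w, x⟫ = g x := InnerProductSpace.toDual_symm_apply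
  obtain ⟨x₀, hx₀⟩ := hQne
  have hw0 : w ≠ 0 := by
    intro hzero
    have hlt := (hgu x₀ hx₀).trans hug
    simp [← hw, hzero] at hlt
  have hnorm : 0 < ‖w‖ := norm_pos_iff.2 hw0
  let h : OrientedHyperplane E :=
    { normal := -(‖w‖⁻¹ • w)
      offset := -(‖w‖⁻¹ * u)
      norm_normal := by rw [norm_neg]; exact norm_smul_inv_norm (𝕜 := ℝ) hw0 }
  have hheight (x : E) : h.height x = ‖w‖⁻¹ * (u - g x) := by
    simp only [h, height, inner_neg_left, real_inner_smul_left, hw]; ring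
  refine ⟨h, fun x hx => ?_, ?_⟩ <;> rw [hheight]
  · exact mul_nonneg (inv_pos.2 hnorm).le (sub_nonneg.2 (hgu x hx).le)
  · exact mul_neg_of_pos_of_neg (inv_pos.2 hnorm) (sub_neg.2 hug)

lemma convex_setOf_depth_nonneg : Convex ℝ {x | 0 ≤ depth S hS x} := by
  intro x hx y hy a b ha hb hab
  exact (add_nonneg (mul_nonneg ha hx) (mul_nonneg hb hy)).trans (le_depth_combo x y ha hb hab)

lemma exists_polytope_between [ProperSpace E] [Nontrivial E] (hΩo : IsOpen Ω)
    (hΩb : Bornology.IsBounded Ω) (hQc : IsCompact Q) (hQ : Convex ℝ Q) (hQne : Q.Nonempty)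
    (hQΩ : Q ⊆ Ω) :
    ∃ (S : Finset (OrientedHyperplane E)) (hS : S.Nonempty),
      (∀ x ∈ Q, 0 ≤ depth S hS x) ∧ {x | 0 ≤ depth S hS x} ⊆ Ω := by
  have hcover : frontier Ω ⊆ ⋃ h ∈ {h : OrientedHyperplane E | ∀ x ∈ Q, 0 ≤ h.height x},
      {y | h.height y < 0} := fun y hy => by
    have hyQ : y ∉ Q := fun hyQ => (hΩo.frontier_eq ▸ hy).2 (hQΩ hyQ)
    obtain ⟨h, hhQ, hhy⟩ := exists_orientedHyperplane_separating hQc.isClosed hQ hQne hyQ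
    exact mem_iUnion₂.2 ⟨h, hhQ, hhy⟩
  have hfrontier : IsCompact (frontier Ω) :=
    hΩb.isCompact_closure.of_isClosed_subset isClosed_frontier frontier_subset_closure
  obtain ⟨T, hTQ, hTfin, hTcover⟩ := hfrontier.elim_finite_subcover_image
    (fun h _ => isOpen_lt h.continuous_height continuous_const) hcover
  obtain ⟨x₀, hx₀⟩ := hQne
  have hT : hTfin.toFinset.Nonempty := by
    have hcompl : (univ ∩ Ωᶜ).Nonempty := by
      rw [univ_inter, nonempty_compl]
      rintro rfl
      exact NormedSpace.unbounded_univ ℝ E hΩb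
    obtain ⟨y, -, hy⟩ := inter_frontier_nonempty_of_isPreconnected isPreconnected_univ
      ⟨x₀, mem_univ _, hQΩ hx₀⟩ hcompl
    obtain ⟨h, hh, -⟩ := mem_iUnion₂.1 (hTcover hy)
    exact ⟨h, hTfin.mem_toFinset.2 hh⟩
  have hdepth : ∀ x ∈ Q, 0 ≤ depth hTfin.toFinset hT x := fun x hx =>
    Finset.le_inf' _ _ fun h hh => hTQ (hTfin.mem_toFinset.1 hh) x hx
  refine ⟨hTfin.toFinset, hT, hdepth, fun x hx => by_contra fun hxΩ => ?_⟩
  obtain ⟨y, hy, hyfr⟩ := inter_frontier_nonempty_of_isPreconnected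
    convex_setOf_depth_nonneg.isPreconnected ⟨x₀, hdepth x₀ hx₀, hQΩ hx₀⟩ ⟨x, hx, hxΩ⟩
  obtain ⟨h, hh, hhy⟩ := mem_iUnion₂.1 (hTcover hyfr)
  exact (hy.trans (depth_le_height (hTfin.mem_toFinset.2 hh))).not_gt hhy

lemma homothety_eq_combo (c x : E) (r : ℝ) :
    AffineMap.homothety c r x = (1 - r) • c + r • x := by
  rw [AffineMap.homothety_eq_lineMap, AffineMap.lineMap_apply_module]

lemma exists_polytope_between_homothety [ProperSpace E] [Nontrivial E] (hΩo : IsOpen Ω)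
    (hΩb : Bornology.IsBounded Ω) (hΩc : Convex ℝ Ω) (hc : c ∈ Ω) (ha : 0 < a) (ha1 : a ≤ 1) :
    ∃ (S : Finset (OrientedHyperplane E)) (hS : S.Nonempty),
      (∀ x ∈ closure Ω, 0 ≤ depth S hS (AffineMap.homothety c (1 - a) x)) ∧
        {x | 0 ≤ depth S hS x} ⊆ Ω := by
  have hcont : Continuous (AffineMap.homothety c (1 - a) : E →ᵃ[ℝ] E) :=
    AffineMap.homothety_continuous c (1 - a)
  have hsubset : AffineMap.homothety c (1 - a) '' closure Ω ⊆ Ω := by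
    rintro _ ⟨x, hx, rfl⟩
    rw [homothety_eq_combo, sub_sub_cancel]
    rw [← hΩo.interior_eq] at hc ⊢
    exact hΩc.combo_interior_closure_mem_interior hc hx ha (by linarith) (by ring)
  obtain ⟨S, hS, hQ, hP⟩ := exists_polytope_between hΩo hΩb (hΩb.isCompact_closure.image hcont)
    (hΩc.closure.affine_image _) (Set.Nonempty.image _ ⟨c, subset_closure hc⟩) hsubset
  exact ⟨S, hS, fun x hx => hQ _ (mem_image_of_mem _ hx), hP⟩

lemma depth_pos_of_forall_depth_homothety_nonneg (hΩo : IsOpen Ω) (hc : c ∈ Ω) (ha1 : a < 1)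
    (hQ : ∀ x ∈ Ω, 0 ≤ depth S hS (AffineMap.homothety c (1 - a) x)) : 0 < depth S hS c := by
  obtain ⟨h, hh, hdepth⟩ := exists_depth_eq_height S hS c
  have hnear : ∀ᶠ t : ℝ in 𝓝[<] 0, c + t • h.normal ∈ Ω := by
    have hcont : Continuous fun t : ℝ => c + t • h.normal := by fun_prop
    exact (hcont.tendsto' 0 c (by simp)).mono_left nhdsWithin_le_nhds (hΩo.mem_nhds hc)
  obtain ⟨t, hmem, ht⟩ := (hnear.and self_mem_nhdsWithin).exists
  have hnonneg := (hQ _ hmem).trans (depth_le_height hh)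
  rw [homothety_eq_combo, h.height_combo _ _ (by ring), h.height_add_smul_normal] at hnonneg
  rw [hdepth]
  nlinarith [mul_pos (sub_pos.2 ha1) (neg_pos.2 ht)]

lemma mul_depth_le_depth_homothety (ha : 0 ≤ a) (ha1 : a ≤ 1) {x : E}
    (hx : 0 ≤ depth S hS (AffineMap.homothety c (1 - a) x)) :
    a * depth S hS c ≤ depth S hS (AffineMap.homothety c ((1 - a) ^ 2) x) := by
  have hcombo : AffineMap.homothety c ((1 - a) ^ 2) x =
      a • c + (1 - a) • AffineMap.homothety c (1 - a) x := by
    simp only [homothety_eq_combo]; module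
  rw [hcombo]
  have := le_depth_combo (S := S) (hS := hS) c (AffineMap.homothety c (1 - a) x) ha
    (sub_nonneg.2 ha1) (by ring)
  linarith [mul_nonneg (sub_nonneg.2 ha1) hx]

lemma neg_height_le_mul_dist {h : OrientedHyperplane E} (hh : h ∈ S) (ha : 0 ≤ a) {p : E}
    (hp : 0 ≤ depth S hS (AffineMap.homothety c (1 - a) p)) : -h.height p ≤ a * dist c p := by
  have hnonneg := hp.trans (depth_le_height hh)
  rw [homothety_eq_combo, h.height_combo _ _ (by ring)] at hnonneg
  linarith [mul_le_mul_of_nonneg_left (h.height_le_add_dist c p) ha]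

lemma dist_eq_abs_height_sub (h : OrientedHyperplane E) {x p : E} (hproj : h.proj p = h.proj x) :
    dist x p = |h.height x - h.height p| := by
  have hsub : x - p = (h.height x - h.height p) • h.normal := by
    rw [proj, proj, sub_eq_sub_iff_add_eq_add] at hproj
    rw [sub_smul, sub_eq_sub_iff_add_eq_add, ← hproj, add_comm]
  rw [dist_eq_norm, hsub, norm_smul, h.norm_normal, mul_one, Real.norm_eq_abs]

end InscribedPolytope

/-! ### Comparison of the integrals over the domain and over its boundary -/

section Assembly

variable {Ω : Set ℝ²} {f : ℝ² → ℝ}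

lemma setIntegral_le_add_of_homothety_image_subset {E : Type*} [NormedAddCommGroup E]
    [NormedSpace ℝ E] [FiniteDimensional ℝ E] [MeasurableSpace E] [BorelSpace E] {μ : Measure E}
    [μ.IsAddHaarMeasure] {s A : Set E} {f : E → ℝ} {M r : ℝ} {c : E} (hs : MeasurableSet s)
    (hμs : μ s ≠ ⊤) (hA : MeasurableSet A) (hAs : A ⊆ s) (hr : 0 ≤ r)
    (hsub : AffineMap.homothety c r '' s ⊆ A) (hf : IntegrableOn f s μ) (hM : 0 ≤ M)
    (hfM : ∀ x ∈ s, f x ≤ M) :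
    ∫ x in s, f x ∂μ ≤
      (∫ x in A, f x ∂μ) + M * ((1 - r ^ Module.finrank ℝ E) * μ.real s) := by
  have hvol : r ^ Module.finrank ℝ E * μ.real s ≤ μ.real A := by
    have := measureReal_mono hsub (measure_ne_top_of_subset hAs hμs)
    rwa [measureReal_def, Measure.addHaar_image_homothety, ENNReal.toReal_mul,
      ENNReal.toReal_ofReal (abs_nonneg _), abs_of_nonneg (pow_nonneg hr _)] at this
  have hrest : ∫ x in s \ A, f x ∂μ ≤ M * ((1 - r ^ Module.finrank ℝ E) * μ.real s) := calc
    ∫ x in s \ A, f x ∂μ ≤ ∫ _ in s \ A, M ∂μ :=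
      setIntegral_mono_on (hf.mono_set sdiff_subset)
        (integrableOn_const (measure_ne_top_of_subset sdiff_subset hμs)) (hs.diff hA)
        fun x hx => hfM x hx.1
    _ = M * (μ.real s - μ.real A) := by
      rw [setIntegral_const, measureReal_sdiff hAs hA hμs, smul_eq_mul, mul_comm]
    _ ≤ M * ((1 - r ^ Module.finrank ℝ E) * μ.real s) := by gcongr; linarith
  rw [← union_sdiff_cancel hAs, setIntegral_union disjoint_sdiff_right (hs.diff hA)
    (hf.mono_set hAs) (hf.mono_set sdiff_subset), union_sdiff_cancel hAs]
  gcongr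

lemma perimeter_lt_top (hΩo : IsOpen Ω) (hΩb : Bornology.IsBounded Ω) (hΩc : Convex ℝ Ω) :
    μH[1] (frontier Ω) < ⊤ := by
  rcases Ω.eq_empty_or_nonempty with rfl | ⟨c, hc⟩
  · simp
  obtain ⟨ρ, hρ, hball⟩ := isOpen_iff.1 hΩo c hc
  have hle := ofReal_mul_perimeter_le_of_ball_subset hΩo hΩb hΩc (half_pos hρ) (half_lt_self hρ)
    hball
  exact ENNReal.lt_top_of_mul_ne_top_right
    (hle.trans_lt (ENNReal.mul_lt_top ENNReal.ofNat_lt_top hΩb.measure_lt_top)).ne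
    (ENNReal.ofReal_pos.2 (half_pos hρ)).ne'

lemma integrableOn_frontier (hΩo : IsOpen Ω) (hΩb : Bornology.IsBounded Ω) (hΩc : Convex ℝ Ω)
    (hfc : ContinuousOn f (closure Ω)) : IntegrableOn f (frontier Ω) μH[1] := by
  obtain ⟨M, hM⟩ := hΩb.isCompact_closure.exists_bound_of_continuousOn hfc
  exact .of_bound (perimeter_lt_top hΩo hΩb hΩc)
    ((hfc.mono frontier_subset_closure).aestronglyMeasurable isClosed_frontier.measurableSet) M
    ((ae_restrict_iff' isClosed_frontier.measurableSet).2
      (.of_forall fun x hx => hM x (frontier_subset_closure hx)))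

lemma setIntegral_depth_mem_Ioc_le_of_homothety (hΩo : IsOpen Ω) (hΩb : Bornology.IsBounded Ω)
    (hΩc : Convex ℝ Ω) (hfc : ContinuousOn f (closure Ω)) (hf0 : ∀ x ∈ closure Ω, 0 ≤ f x)
    {δ η : ℝ} (hη : 0 ≤ η)
    (hosc : ∀ x ∈ closure Ω, ∀ y ∈ closure Ω, dist x y < δ → f x ≤ f y + η)
    {S : Finset (OrientedHyperplane ℝ²)} {hS : S.Nonempty} {c : ℝ²} (hc : c ∈ Ω) {a τ : ℝ}
    (ha : 0 ≤ a) (hQ : ∀ x ∈ closure Ω, 0 ≤ depth S hS (AffineMap.homothety c (1 - a) x))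
    (hP : {x | 0 ≤ depth S hS x} ⊆ Ω) (hτ : 0 ≤ τ) (haτ : τ + a * diam (closure Ω) < δ) :
    ∫ x in {x | depth S hS x ∈ Ioc 0 τ}, f x ≤
      τ * ((∫ x in frontier Ω, f x ∂μH[1]) + η * μH[1].real (frontier Ω)) := by
  have hfi := integrableOn_frontier hΩo hΩb hΩc hfc
  have hηi : IntegrableOn (fun _ => η) (frontier Ω) μH[1] :=
    integrableOn_const (perimeter_lt_top hΩo hΩb hΩc).ne
  have hintegral : ∫ p in frontier Ω, (f p + η) ∂μH[1] =
      (∫ p in frontier Ω, f p ∂μH[1]) + η * μH[1].real (frontier Ω) := by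
    rw [integral_add hfi hηi, setIntegral_const, smul_eq_mul, mul_comm]
  rw [← hintegral]
  refine setIntegral_depth_mem_Ioc_le hΩb hP hτ
    ((hfc.integrableOn_compact hΩb.isCompact_closure).mono_set subset_closure)
    (fun x hx => hf0 x (subset_closure hx)) (hfi.add hηi)
    (fun p hp => add_nonneg (hf0 p (frontier_subset_closure hp)) hη)
    fun h hh x p hx hxh hp hph hproj => ?_
  have hpΩ := frontier_subset_closure hp
  refine hosc x (subset_closure (hP hx.1.le)) p hpΩ (lt_of_le_of_lt ?_ haτ)
  calc dist x p = h.height x + -h.height p := by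
        rw [dist_eq_abs_height_sub h hproj, abs_of_nonneg (by linarith [hx.1]), sub_eq_add_neg]
    _ ≤ τ + a * dist c p := add_le_add (hxh ▸ hx.2) (neg_height_le_mul_dist hh ha (hQ p hpΩ))
    _ ≤ τ + a * diam (closure Ω) := by
      gcongr
      exact dist_le_diam_of_mem hΩb.closure (subset_closure hc) hpΩ

lemma setIntegral_le_inradius_mul_add (hΩo : IsOpen Ω) (hΩb : Bornology.IsBounded Ω)
    (hΩc : Convex ℝ Ω) (hΩne : Ω.Nonempty) (hfc : ContinuousOn f (closure Ω))
    (hf0 : ∀ x ∈ closure Ω, 0 ≤ f x) (hf : ∀ x ∈ Ω, DifferentiableAt ℝ f x)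
    (hf' : ∀ x ∈ Ω, DifferentiableAt ℝ (fun y => fderiv ℝ f y) x)
    (hsub : ∀ x ∈ Ω, 0 ≤ laplacian f x) {M : ℝ} (hfM : ∀ x ∈ Ω, f x ≤ M) {δ η : ℝ} (hη : 0 ≤ η)
    (hosc : ∀ x ∈ closure Ω, ∀ y ∈ closure Ω, dist x y < δ → f x ≤ f y + η)
    {a : ℝ} (ha : 0 < a) (ha1 : a < 1) (haδ : a * diam (closure Ω) < δ) :
    ∫ x in Ω, f x ≤
      inradius Ω * ((∫ x in frontier Ω, f x ∂μH[1]) + η * μH[1].real (frontier Ω)) +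
        M * ((1 - ((1 - a) ^ 2) ^ 2) * volume.real Ω) := by
  obtain ⟨c, hc⟩ := hΩne
  have hfi : IntegrableOn f Ω :=
    (hfc.integrableOn_compact hΩb.isCompact_closure).mono_set subset_closure
  have hf0Ω : ∀ x ∈ Ω, 0 ≤ f x := fun x hx => hf0 x (subset_closure hx)
  obtain ⟨S, hS, hQ, hP⟩ := exists_polytope_between_homothety hΩo hΩb hΩc hc ha ha1.le
  have hdepth : 0 < a * depth S hS c := mul_pos ha <|
    depth_pos_of_forall_depth_homothety_nonneg hΩo hc ha1 fun x hx => hQ x (subset_closure hx)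
  obtain ⟨τ, hτ, hτmin⟩ := exists_between (lt_min hdepth (sub_pos.2 haδ))
  obtain ⟨hτdepth, hτδ⟩ := lt_min_iff.1 hτmin
  have hlayer := setIntegral_depth_mem_Ioc_le_of_homothety hΩo hΩb hΩc hfc hf0 hη hosc hc ha.le hQ
    hP hτ.le (lt_sub_iff_add_lt.1 hτδ)
  have hdeep := setIntegral_lt_depth_le hΩo hΩb hf0Ω hfi hf hf' hsub (fun x hx => hP hx.le) hτ
  have hshell := setIntegral_le_add_of_homothety_image_subset (r := (1 - a) ^ 2) (c := c)
    (A := {x | τ < depth S hS x}) hΩo.measurableSet hΩb.measure_lt_top.ne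
    (measurableSet_lt measurable_const continuous_depth.measurable)
    (fun x hx => hP (hτ.trans hx).le) (sq_nonneg _)
    (image_subset_iff.2 fun x hx => hτdepth.trans_le
      (mul_depth_le_depth_homothety ha.le ha1.le (hQ x (subset_closure hx))))
    hfi ((hf0Ω c hc).trans (hfM c hc)) hfM
  rw [finrank_euclideanSpace_fin] at hshell
  refine hshell.trans (add_le_add_left (hdeep.trans ?_) _)
  calc inradius Ω / τ * ∫ x in {x | depth S hS x ∈ Ioc 0 τ}, f x
    _ ≤ inradius Ω / τ *
        (τ * ((∫ x in frontier Ω, f x ∂μH[1]) + η * μH[1].real (frontier Ω))) :=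
      mul_le_mul_of_nonneg_left hlayer (div_nonneg (inradius_nonneg Ω) hτ.le)
    _ = _ := by rw [← mul_assoc, div_mul_cancel₀ _ hτ.ne']

lemma setIntegral_le_inradius_mul_setIntegral_frontier (hΩo : IsOpen Ω)
    (hΩb : Bornology.IsBounded Ω) (hΩc : Convex ℝ Ω) (hΩne : Ω.Nonempty)
    (hfc : ContinuousOn f (closure Ω))
    (hf0 : ∀ x ∈ closure Ω, 0 ≤ f x) (hf : ∀ x ∈ Ω, DifferentiableAt ℝ f x)
    (hf' : ∀ x ∈ Ω, DifferentiableAt ℝ (fun y => fderiv ℝ f y) x)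
    (hsub : ∀ x ∈ Ω, 0 ≤ laplacian f x) :
    ∫ x in Ω, f x ≤ inradius Ω * ∫ x in frontier Ω, f x ∂μH[1] := by
  obtain ⟨M, hM⟩ := hΩb.isCompact_closure.exists_bound_of_continuousOn hfc
  have hfM (x) (hx : x ∈ Ω) : f x ≤ M := (le_abs_self _).trans (hM x (subset_closure hx))
  have hη (η : ℝ) (hη : 0 < η) : ∫ x in Ω, f x ≤
      inradius Ω * ((∫ x in frontier Ω, f x ∂μH[1]) + η * μH[1].real (frontier Ω)) := by
    obtain ⟨δ, hδ, hfδ⟩ := uniformContinuousOn_iff.1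
      (hΩb.isCompact_closure.uniformContinuousOn_of_continuous hfc) η hη
    have hosc : ∀ x ∈ closure Ω, ∀ y ∈ closure Ω, dist x y < δ → f x ≤ f y + η := by
      intro x hx y hy hxy
      linarith [(le_abs_self (f x - f y)).trans (hfδ x hx y hy hxy).le]
    have hsmall : ∀ᶠ a : ℝ in 𝓝[>] 0, a * diam (closure Ω) < δ :=
      (((continuous_mul_const _).tendsto' 0 0 (zero_mul _)).mono_left
        nhdsWithin_le_nhds).eventually_lt_const hδ
    have hlim : Tendsto (fun a : ℝ => inradius Ω *
        ((∫ x in frontier Ω, f x ∂μH[1]) + η * μH[1].real (frontier Ω)) +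
          M * ((1 - ((1 - a) ^ 2) ^ 2) * volume.real Ω)) (𝓝[>] 0) (𝓝 (inradius Ω *
        ((∫ x in frontier Ω, f x ∂μH[1]) + η * μH[1].real (frontier Ω)))) :=
      (Continuous.tendsto' (by fun_prop) _ _ (by simp)).mono_left nhdsWithin_le_nhds
    refine ge_of_tendsto hlim ?_
    filter_upwards [hsmall, Ioo_mem_nhdsGT one_pos] with a haδ ha
    exact setIntegral_le_inradius_mul_add hΩo hΩb hΩc hΩne hfc hf0 hf hf' hsub hfM hη.le hosc
      ha.1 ha.2 haδ
  have hlim : Tendsto (fun η : ℝ => inradius Ω *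
      ((∫ x in frontier Ω, f x ∂μH[1]) + η * μH[1].real (frontier Ω))) (𝓝[>] 0)
      (𝓝 (inradius Ω * ∫ x in frontier Ω, f x ∂μH[1])) :=
    (Continuous.tendsto' (by fun_prop) _ _ (by simp)).mono_left nhdsWithin_le_nhds
  exact ge_of_tendsto hlim (eventually_nhdsWithin_of_forall hη)

end Assembly

theorem hermite_hadamard_subharmonic_dim_two_general {Ω : Set ℝ²} (hΩo : IsOpen Ω)
    (hΩb : Bornology.IsBounded Ω) (hΩc : Convex ℝ Ω) (hΩne : Ω.Nonempty) {f : ℝ² → ℝ}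
    (hfc : ContinuousOn f (closure Ω)) (hf0 : ∀ x ∈ Ω, 0 ≤ f x)
    (hf : ∀ x ∈ Ω, DifferentiableAt ℝ f x)
    (hf' : ∀ x ∈ Ω, DifferentiableAt ℝ (fun y => fderiv ℝ f y) x)
    (hsub : ∀ x ∈ Ω, 0 ≤ laplacian f x) :
    (1 / (volume Ω).toReal) * ∫ x in Ω, f x ≤
      (2 / (μH[1] (frontier Ω)).toReal) * ∫ x in frontier Ω, f x ∂μH[1] := by
  have hf0' : ∀ x ∈ closure Ω, 0 ≤ f x := fun x hx =>
    le_on_closure hf0 continuousOn_const hfc hx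
  have hJ : 0 ≤ ∫ x in frontier Ω, f x ∂μH[1] :=
    setIntegral_nonneg isClosed_frontier.measurableSet fun x hx =>
      hf0' x (frontier_subset_closure hx)
  have hbound := setIntegral_le_inradius_mul_setIntegral_frontier hΩo hΩb hΩc hΩne hfc hf0' hf hf'
    hsub
  have hV : 0 < (volume Ω).toReal :=
    ENNReal.toReal_pos (hΩo.measure_pos volume hΩne).ne' hΩb.measure_lt_top.ne
  rcases eq_or_ne (μH[1] (frontier Ω)) 0 with hzero | hpos
  · rw [Measure.restrict_eq_zero.2 hzero, integral_zero_measure, mul_zero] at hbound ⊢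
    exact mul_nonpos_of_nonneg_of_nonpos (by positivity) hbound
  have hH : 0 < (μH[1] (frontier Ω)).toReal :=
    ENNReal.toReal_pos hpos (perimeter_lt_top hΩo hΩb hΩc).ne
  rw [one_div_mul_eq_div, div_mul_eq_mul_div, div_le_div_iff₀ hV hH]
  calc (∫ x in Ω, f x) * (μH[1] (frontier Ω)).toReal
    _ ≤ (inradius Ω * ∫ x in frontier Ω, f x ∂μH[1]) * (μH[1] (frontier Ω)).toReal := by gcongr
    _ = (inradius Ω * (μH[1] (frontier Ω)).toReal) * ∫ x in frontier Ω, f x ∂μH[1] := by ring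
    _ ≤ (2 * (volume Ω).toReal) * ∫ x in frontier Ω, f x ∂μH[1] :=
      mul_le_mul_of_nonneg_right (inradius_mul_perimeter_le hΩo hΩb hΩc) hJ
    _ = (2 * ∫ x in frontier Ω, f x ∂μH[1]) * (volume Ω).toReal := by ring

/-- Hermite–Hadamard inequality for positive subharmonic functions on planar convex
domains, with constant `3`. -/
theorem hermite_hadamard_subharmonic_dim_two
    (Ω : Set (EuclideanSpace ℝ (Fin 2)))
    (hΩo : IsOpen Ω) (hΩb : Bornology.IsBounded Ω)
    (hΩc : Convex ℝ Ω) (hΩne : (interior Ω).Nonempty)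
    (f : EuclideanSpace ℝ (Fin 2) → ℝ)
    (hfc : ContinuousOn f (closure Ω))
    (hfpos : ∀ x ∈ Ω, 0 < f x)
    (hf1 : ∀ x ∈ Ω, DifferentiableAt ℝ f x)
    (hf2 : ∀ x ∈ Ω, DifferentiableAt ℝ (fun y => fderiv ℝ f y) x)
    (hsub : ∀ x ∈ Ω, 0 ≤ laplacian f x) :
    (1 / (volume Ω).toReal) * ∫ x in Ω, f x ≤
      (3 / (μH[(1 : ℝ)] (frontier Ω)).toReal) *
        ∫ x in frontier Ω, f x ∂μH[(1 : ℝ)] := by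
  refine (hermite_hadamard_subharmonic_dim_two_general hΩo hΩb hΩc (hΩne.mono interior_subset) hfc
    (fun x hx => (hfpos x hx).le) hf1 hf2 hsub).trans ?_
  gcongr
  · exact setIntegral_nonneg isClosed_frontier.measurableSet fun x hx => le_on_closure
      (fun y hy => (hfpos y hy).le) continuousOn_const hfc (frontier_subset_closure hx)
  · norm_num
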